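/- Let G be a discrete group and let ∂_F G be a Furstenberg boundary of G; for x ∈ ∂_F G let G_x = {g ∈ G : gx = x} denote the stabilizer subgroup. Then G is not C*-simple if and only if the set {G_x : x ∈ ∂_F G} ⊆ S(G) is a non-trivial amenable uniformly recurrent subgroup of G. -/

import Mathlib

noncomputable section
open scoped ENNReal ComplexOrder lp
open MeasureTheory
set_option maxHeartbeats 1000000
set_option synthInstance.maxHeartbeats 1000000

universe u

variable {G : Type u} [Group G]

theorem translat_mem (g : G) (f : ℓ²(G, ℂ)) : Memℓp (fun h => f (g⁻¹ * h)) 2 := by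
  have hf : Summable fun i : G => ‖f i‖ ^ (2 : ℝ≥0∞).toReal :=
    (memℓp_gen_iff (by norm_num)).1 (lp.memℓp f)
  exact memℓp_gen ((Equiv.mulLeft g⁻¹).summable_iff.2 hf)

/-- The left regular representation of `g ∈ G` as a linear isometric bijection of `ℓ²(G)`,
given by `(λ_g ξ)(h) = ξ(g⁻¹ h)`. -/
def lregE (g : G) : ℓ²(G, ℂ) ≃ₗᵢ[ℂ] ℓ²(G, ℂ) :=
{ toFun := fun f => ⟨fun h => f (g⁻¹ * h), translat_mem g f⟩
  invFun := fun f => ⟨fun h => f (g * h), by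
    have := translat_mem g⁻¹ f; simp only [inv_inv] at this; exact this⟩
  map_add' := by intro f₁ f₂; ext h; simp [lp.coeFn_add]; rfl
  map_smul' := by intro c f; ext h; simp [lp.coeFn_smul]
  left_inv := by intro f; ext h; simp
  right_inv := by intro f; ext h; simp
  norm_map' := by
    intro f
    rw [lp.norm_eq_tsum_rpow (by norm_num) f, lp.norm_eq_tsum_rpow (by norm_num)]
    congr 1
    exact (Equiv.mulLeft g⁻¹).tsum_eq (fun h => ‖f h‖ ^ (2 : ℝ≥0∞).toReal) }

/-- The left regular representation `λ` as bounded operators on `ℓ²(G)`. -/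
def lreg (g : G) : ℓ²(G, ℂ) →L[ℂ] ℓ²(G, ℂ) :=
  (lregE g).toContinuousLinearEquiv.toContinuousLinearMap

variable (G) in
/-- The reduced group C*-algebra `C*_λ(G)`: the norm-closed star subalgebra of the algebra of
bounded operators on `ℓ²(G)` generated by the image of the left regular representation. -/
def redCstar : StarSubalgebra ℂ (ℓ²(G, ℂ) →L[ℂ] ℓ²(G, ℂ)) :=
  (StarAlgebra.adjoin ℂ (Set.range (lreg (G := G)))).topologicalClosure

variable (G) in
/-- `G` is C*-simple: `C*_λ(G)` has no closed two-sided ideals other than `{0}` and the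
whole algebra. -/
def IsCstarSimple : Prop :=
  ∀ I : TwoSidedIdeal (redCstar G), IsClosed (I : Set (redCstar G)) → I = ⊥ ∨ I = ⊤

attribute [irreducible] redCstar lreg lregE

variable (G) in
/-- The Chabauty topology on the space of subgroups of `G`: the topology induced from the
product topology on `{0,1}^G` by identifying a subgroup with its indicator function. -/
def chabauty : TopologicalSpace (Subgroup G) :=
  letI : ∀ p : Prop, Decidable p := Classical.propDecidable
  TopologicalSpace.induced (fun (H : Subgroup G) (g : G) => decide (g ∈ H))
    (inferInstance : TopologicalSpace (G → Bool))

attribute [instance] chabauty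

/-- The conjugate subgroup `gHg⁻¹`. -/
def conjSub (g : G) (H : Subgroup G) : Subgroup G :=
  H.map (MulAut.conj g).toMonoidHom

variable (G) in
/-- A uniformly recurrent subgroup of `G`: a nonempty, Chabauty-closed, conjugation-invariant
and minimal (all orbits are dense) collection of subgroups of `G`. -/
def IsURS (X : Set (Subgroup G)) : Prop :=
  X.Nonempty ∧ IsClosed X ∧ (∀ (g : G), ∀ H ∈ X, conjSub g H ∈ X) ∧
    ∀ H ∈ X, ∀ K ∈ X, K ∈ closure {L : Subgroup G | ∃ g : G, L = conjSub g H}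

/-- Left translation of a bounded function on a group `H`. -/
def translInfty {H : Type*} [Group H] (h : H) (f : lp (fun _ : H => ℝ) ∞) :
    lp (fun _ : H => ℝ) ∞ :=
  ⟨fun k => f (h⁻¹ * k), by
    apply memℓp_infty
    have : (Set.range fun k => ‖f (h⁻¹ * k)‖) = Set.range fun k => ‖f k‖ :=
      (Equiv.mulLeft h⁻¹).surjective.range_comp (fun k => ‖f k‖)
    rw [this]
    exact memℓp_infty_iff.1 (lp.memℓp f)⟩

/-- A group `H` is amenable: there exists a left-invariant mean on `ℓ∞(H)`, i.e. a unital
positive linear functional invariant under left translation. -/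
def IsAmenable (H : Type*) [Group H] : Prop :=
  ∃ m : lp (fun _ : H => ℝ) ∞ →ₗ[ℝ] ℝ,
    m 1 = 1 ∧ (∀ f : lp (fun _ : H => ℝ) ∞, (∀ k, 0 ≤ f k) → 0 ≤ m f) ∧
      ∀ (h : H) (f : lp (fun _ : H => ℝ) ∞), m (translInfty h f) = m f

/-- `X` is a `G`-boundary: a nonempty compact Hausdorff `G`-space such that for every regular
Borel probability measure `μ` on `X` and every `x ∈ X`, the point mass `δ_x` lies in the
weak* closure of the orbit `Gμ`. -/
def IsBoundary (G X : Type*) [Group G] [TopologicalSpace X] [CompactSpace X] [T2Space X]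
    [MulAction G X] [ContinuousConstSMul G X] : Prop :=
  Nonempty X ∧
  letI : MeasurableSpace X := borel X
  haveI : BorelSpace X := ⟨rfl⟩
  ∀ (μ : ProbabilityMeasure X) (x : X),
    (⟨Measure.dirac x, Measure.dirac.isProbabilityMeasure⟩ : ProbabilityMeasure X) ∈
      closure {ν : ProbabilityMeasure X |
        ∃ g : G, ν = μ.map ((continuous_const_smul g).measurable.aemeasurable (μ := μ.toMeasure))
          (f := (g • ·))}

/-- `Y` is a Furstenberg boundary of `G`: a `G`-boundary admitting a continuous `G`-equivariant
surjection onto every `G`-boundary. -/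
def IsFurstenberg (G Y : Type u) [Group G] [TopologicalSpace Y] [CompactSpace Y] [T2Space Y]
    [MulAction G Y] [ContinuousConstSMul G Y] : Prop :=
  IsBoundary G Y ∧
  ∀ (X : Type u) (iT : TopologicalSpace X) (iC : @CompactSpace X iT) (iH : @T2Space X iT)
    (iM : MulAction G X) (iS : @ContinuousConstSMul G X iT iM.toSMul),
    @IsBoundary G X _ iT iC iH iM iS →
      ∃ q : Y → X, @Continuous _ _ _ iT q ∧ Function.Surjective q ∧
        ∀ (g : G) (y : Y), q (g • y) = g • q y

open scoped CompactlySupported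
set_option linter.style.haveILetI false

/-- point mass as a probability measure -/
def dirP {X : Type*} [MeasurableSpace X] (x : X) : ProbabilityMeasure X :=
  ⟨Measure.dirac x, Measure.dirac.isProbabilityMeasure⟩

theorem dirP_coe {X : Type*} [MeasurableSpace X] (x : X) :
    (dirP x : Measure X) = Measure.dirac x := rfl

/-- translate of a continuous function by a group element -/
def trC {Y : Type*} [TopologicalSpace Y] [MulAction G Y] [ContinuousConstSMul G Y]
    (g : G) (F : C(Y, ℝ)) : C(Y, ℝ) := F.comp ⟨fun y => g • y, continuous_const_smul g⟩

theorem trC_apply {Y : Type*} [TopologicalSpace Y] [MulAction G Y] [ContinuousConstSMul G Y]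
    (g : G) (F : C(Y, ℝ)) (y : Y) : trC g F y = F (g • y) := rfl

/-- Riesz representation for states on a compact space. -/
theorem exists_prob_of_state {Y : Type*} [TopologicalSpace Y] [CompactSpace Y] [T2Space Y]
    [MeasurableSpace Y] [BorelSpace Y]
    (L : C(Y, ℝ) →ₗ[ℝ] ℝ) (hpos : ∀ f : C(Y, ℝ), (∀ y, 0 ≤ f y) → 0 ≤ L f) (h1 : L 1 = 1) :
    ∃ μ : ProbabilityMeasure Y, ∀ f : C(Y, ℝ), ∫ y, f y ∂(μ : Measure Y) = L f := by
  let L' : C_c(Y, ℝ) →ₚ[ℝ] ℝ := PositiveLinearMap.mk₀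
    { toFun := fun f => L f.toContinuousMap
      map_add' := fun f g => L.map_add f.toContinuousMap g.toContinuousMap
      map_smul' := fun c f => L.map_smul c f.toContinuousMap }
    (fun f hf => hpos _ (fun y => hf y))
  have key : ∀ f : C(Y, ℝ), ∫ y, f y ∂(RealRMK.rieszMeasure L') = L f := fun f =>
    RealRMK.integral_rieszMeasure L'
      (CompactlySupportedContinuousMap.mk f (HasCompactSupport.of_compactSpace _))
  have hp : IsProbabilityMeasure (RealRMK.rieszMeasure L') := by
    have := key 1
    rw [h1] at this
    simp only [ContinuousMap.one_apply, integral_const, smul_eq_mul, mul_one] at this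
    refine ⟨?_⟩
    rw [Measure.real] at this
    rw [← ENNReal.ofReal_toReal (measure_ne_top (RealRMK.rieszMeasure L') Set.univ), this]
    simp
  exact ⟨⟨_, hp⟩, key⟩

/-- The boundary property, in terms of states. -/
theorem bdry_state {Y : Type*} [TopologicalSpace Y] [CompactSpace Y] [T2Space Y] [MulAction G Y]
    [ContinuousConstSMul G Y] (hY : IsBoundary G Y)
    (L : C(Y, ℝ) →ₗ[ℝ] ℝ) (hpos : ∀ f : C(Y, ℝ), (∀ y, 0 ≤ f y) → 0 ≤ L f) (h1 : L 1 = 1)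
    (x : Y) (F : C(Y, ℝ)) {ε : ℝ} (hε : 0 < ε) : ∃ g : G, |L (trC g F) - F x| < ε := by
  letI : MeasurableSpace Y := borel Y
  haveI : BorelSpace Y := ⟨rfl⟩
  obtain ⟨μ, hμ⟩ := exists_prob_of_state L hpos h1
  have h : dirP x ∈ closure {ν : ProbabilityMeasure Y |
        ∃ g : G, ν = μ.map ((continuous_const_smul g).measurable.aemeasurable (μ := μ.toMeasure))
          (f := (g • ·))} := hY.2 μ x
  have hc := ProbabilityMeasure.continuous_integral_continuousMap F
  rw [mem_closure_iff] at h
  obtain ⟨ν, hν, g, rfl⟩ := h {ν | |∫ y, F y ∂(ν : Measure Y) - F x| < ε}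
    (isOpen_lt (by fun_prop) continuous_const) (by
      simp [hε, dirP_coe])
  refine ⟨g, ?_⟩
  rw [← hμ]
  simp only [Set.mem_setOf_eq, ProbabilityMeasure.toMeasure_map] at hν
  rw [integral_map (continuous_const_smul g).measurable.aemeasurable
    F.continuous.aestronglyMeasurable] at hν
  exact hν

/-- A criterion for a point mass to lie in the closure of a set of measures. -/
theorem dirac_mem_closure {X : Type*} [TopologicalSpace X] [CompactSpace X] [T2Space X]
    [MeasurableSpace X] [BorelSpace X] (S : Set (ProbabilityMeasure X)) (x : X)
    (h : ∀ F : C(X, ℝ), (∀ y, 0 ≤ F y) → F x = 0 → ∃ ν ∈ S, ∫ y, F y ∂(ν : Measure X) < 1) :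
    dirP x ∈ closure S := by
  let I := {F : C(X, ℝ) // (∀ y, 0 ≤ F y) ∧ F x = 0}
  haveI : Nonempty I := ⟨⟨0, by simp⟩⟩
  haveI : IsDirectedOrder I := ⟨fun a b => ⟨⟨a.1 + b.1, fun y => by
      simpa using add_nonneg (a.2.1 y) (b.2.1 y), by simp [a.2.2, b.2.2]⟩,
      fun y => by simpa using b.2.1 y, fun y => by simpa using a.2.1 y⟩⟩
  choose ν hνS hν using fun F : I => h F.1 F.2.1 F.2.2
  have hIntg : ∀ (F : C(X, ℝ)) (m : ProbabilityMeasure X), Integrable F (m : Measure X) := by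
    intro F m
    exact F.continuous.integrable_of_hasCompactSupport (HasCompactSupport.of_compactSpace F)
  have h0 : ∀ F : C(X, ℝ), (∀ y, 0 ≤ F y) → F x = 0 →
      Filter.Tendsto (fun i : I => ∫ y, F y ∂(ν i : Measure X)) Filter.atTop (nhds 0) := by
    intro F hF hFx
    rw [Metric.tendsto_nhds]
    intro ε hε
    rw [Filter.eventually_atTop]
    refine ⟨⟨ε⁻¹ • F, fun y => by
      simpa using mul_nonneg (inv_nonneg.2 hε.le) (hF y), by simp [hFx]⟩, fun i hi => ?_⟩
    have h1 : ∫ y, F y ∂(ν i : Measure X) ≤ ∫ y, ε * i.1 y ∂(ν i : Measure X) := by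
      refine integral_mono (hIntg _ _) ((hIntg _ _).const_mul ε) (fun y => ?_)
      have := hi y
      simp only [ContinuousMap.smul_apply, smul_eq_mul, ContinuousMap.toFun_eq_coe] at this
      rwa [inv_mul_le_iff₀ hε] at this
    rw [integral_const_mul] at h1
    have h2 := hν i
    have h3 : 0 ≤ ∫ y, F y ∂(ν i : Measure X) := integral_nonneg hF
    rw [Real.dist_eq, sub_zero, abs_of_nonneg h3]
    nlinarith
  have ht : Filter.Tendsto ν Filter.atTop
      (nhds (dirP x)) := by
    rw [ProbabilityMeasure.tendsto_iff_forall_integral_tendsto]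
    intro F
    let F' : C(X, ℝ) := ⟨fun y => |F y - F x|, by fun_prop⟩
    have h1 := h0 F' (fun y => abs_nonneg _) (by simp [F'])
    simp only [dirP_coe, integral_dirac]
    rw [tendsto_iff_norm_sub_tendsto_zero]
    refine squeeze_zero (fun _ => norm_nonneg _) (fun i => ?_) h1
    have hFi : Integrable F (ν i : Measure X) := hIntg F.toContinuousMap (ν i)
    have : ∫ y, F y ∂(ν i : Measure X) - F x = ∫ y, (F y - F x) ∂(ν i : Measure X) := by
      rw [integral_sub hFi (integrable_const _)]; simp
    rw [this]
    exact norm_integral_le_integral_norm _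
  exact mem_closure_of_tendsto ht (Filter.Eventually.of_forall hνS)
/-- bounded real functions on `G` -/
abbrev LI (G : Type*) := lp (fun _ : G => ℝ) ∞

/-- constructor for bounded functions -/
def mkLI {G : Type*} (f : G → ℝ) (c : ℝ) (h : ∀ k, |f k| ≤ c) : LI G :=
  ⟨f, memℓp_infty ⟨c, by rintro _ ⟨k, rfl⟩; exact h k⟩⟩

theorem mkLI_apply {G : Type*} (f : G → ℝ) (c : ℝ) (h : ∀ k, |f k| ≤ c) (k : G) :
    mkLI f c h k = f k := rfl

theorem LI_abs_le {G : Type*} (f : LI G) (k : G) : |f k| ≤ ‖f‖ :=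
  lp.norm_apply_le_norm (by simp) f k

theorem LI_ext {G : Type*} {f f' : LI G} (h : ∀ k, f k = f' k) : f = f' :=
  lp.ext (funext h)

theorem tr_apply (g : G) (f : LI G) (k : G) : translInfty g f k = f (g⁻¹ * k) := rfl

theorem tr_add (g : G) (f f' : LI G) :
    translInfty g (f + f') = translInfty g f + translInfty g f' := by
  apply LI_ext; intro k; simp [tr_apply, lp.coeFn_add]

theorem tr_smul (g : G) (c : ℝ) (f : LI G) :
    translInfty g (c • f) = c • translInfty g f := by
  apply LI_ext; intro k; simp [tr_apply, lp.coeFn_smul]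

theorem tr_tr (g h : G) (f : LI G) :
    translInfty g (translInfty h f) = translInfty (g * h) f := by
  apply LI_ext; intro k; simp [tr_apply, mul_assoc]

theorem tr_one (f : LI G) : translInfty (1 : G) f = f := by
  apply LI_ext; intro k; simp [tr_apply]

/-- supremum of a bounded function -/
def supLI (f : LI G) : ℝ := ⨆ k, f k

theorem LI_bdd (f : LI G) : BddAbove (Set.range fun k => f k) :=
  ⟨‖f‖, by rintro _ ⟨k, rfl⟩; exact (le_abs_self _).trans (LI_abs_le f k)⟩

theorem le_supLI (f : LI G) (k : G) : f k ≤ supLI f := le_ciSup (LI_bdd f) k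

theorem supLI_le (f : LI G) (c : ℝ) (h : ∀ k, f k ≤ c) : supLI f ≤ c := ciSup_le h

theorem supLI_add (f f' : LI G) : supLI (f + f') ≤ supLI f + supLI f' :=
  supLI_le _ _ fun k => add_le_add (le_supLI f k) (le_supLI f' k)

theorem supLI_smul (c : ℝ) (hc : 0 ≤ c) (f : LI G) : supLI (c • f) = c * supLI f :=
  (Real.mul_iSup_of_nonneg hc _).symm

/-- Hahn–Banach, dominated extension along a linear map. -/
theorem hahn_sub {E V : Type*} [AddCommGroup E] [Module ℝ E] [AddCommGroup V] [Module ℝ V]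
    (N : E → ℝ) (hom : ∀ c : ℝ, 0 ≤ c → ∀ x, N (c • x) = c * N x)
    (hadd : ∀ x y, N (x + y) ≤ N x + N y) (T : V →ₗ[ℝ] E) (e : V →ₗ[ℝ] ℝ)
    (h : ∀ f, e f ≤ N (T f)) : ∃ L : E →ₗ[ℝ] ℝ, (∀ u, L u ≤ N u) ∧ ∀ f, L (T f) = e f := by
  have hN0 : N 0 = 0 := by simpa using hom 0 le_rfl 0
  have hker : LinearMap.ker T ≤ LinearMap.ker e := by
    intro f hf
    rw [LinearMap.mem_ker] at hf ⊢
    have h1 := h f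
    have h2 := h (-f)
    simp only [map_neg, hf, hN0, neg_zero] at h1 h2
    linarith
  let l : LinearMap.range T →ₗ[ℝ] ℝ :=
    ((LinearMap.ker T).liftQ e hker) ∘ₗ T.quotKerEquivRange.symm.toLinearMap
  have hl : ∀ f, l ⟨T f, LinearMap.mem_range_self T f⟩ = e f := by
    intro f
    have : T.quotKerEquivRange.symm ⟨T f, LinearMap.mem_range_self T f⟩ =
        (LinearMap.ker T).mkQ f := by
      rw [LinearEquiv.symm_apply_eq]
      ext
      rfl
    simp only [l, LinearMap.comp_apply, LinearEquiv.coe_coe, this]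
    simp
  obtain ⟨L, hL1, hL2⟩ := exists_extension_of_le_sublinear ⟨LinearMap.range T, l⟩ N
    (fun c hc x => hom c hc.le x) hadd (by
      rintro ⟨_, f, rfl⟩
      exact (hl f).le.trans (h f))
  exact ⟨L, hL2, fun f => (hL1 ⟨T f, LinearMap.mem_range_self T f⟩).trans (hl f)⟩

/-- invariant sublinear functionals dominated by the supremum -/
structure SubL (p : LI G → ℝ) : Prop where
  add : ∀ f f', p (f + f') ≤ p f + p f'
  smul : ∀ c : ℝ, 0 ≤ c → ∀ f, p (c • f) = c * p f
  inv : ∀ (g : G) f, p (translInfty g f) = p f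
  bd : ∀ f c, (∀ k, f k ≤ c) → p f ≤ c

theorem SubL.zero {p : LI G → ℝ} (hp : SubL p) : p 0 = 0 := by simpa using hp.smul 0 le_rfl 0

theorem SubL.neg {p : LI G → ℝ} (hp : SubL p) (f : LI G) : - p (-f) ≤ p f := by
  have := hp.add f (-f)
  rw [add_neg_cancel, hp.zero] at this
  linarith

theorem SubL.lower {p : LI G → ℝ} (hp : SubL p) (f : LI G) : - ‖f‖ ≤ p f := by
  refine le_trans ?_ (hp.neg f)
  rw [neg_le_neg_iff]
  exact hp.bd _ _ fun k => by
    have := (neg_le_abs (f k)).trans (LI_abs_le f k)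
    simpa using this

theorem subL_sup : SubL (supLI (G := G)) where
  add := supLI_add
  smul := supLI_smul
  inv := fun g f => by
    unfold supLI
    exact (Equiv.mulLeft g⁻¹).surjective.iSup_comp (fun k => f k)
  bd := supLI_le

variable (G) in
theorem exists_min_subL : ∃ p : LI G → ℝ, SubL p ∧ ∀ p', SubL p' → (∀ f, p' f ≤ p f) → p' = p := by
  let A := {p : LI G → ℝ // SubL p}
  let r : A → A → Prop := fun p q => ∀ f, q.1 f ≤ p.1 f
  obtain ⟨m, hm⟩ := exists_maximal_of_chains_bounded (r := r) (by
    intro c hc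
    rcases c.eq_empty_or_nonempty with rfl | hne
    · exact ⟨⟨supLI, subL_sup⟩, by simp⟩
    haveI : Nonempty c := hne.to_subtype
    have hbb : ∀ f, BddBelow (Set.range fun p : c => p.1.1 f) := fun f =>
      ⟨-‖f‖, by rintro _ ⟨p, rfl⟩; exact p.1.2.lower f⟩
    refine ⟨⟨fun f => ⨅ p : c, p.1.1 f, ?_, ?_, ?_, ?_⟩, ?_⟩
    · intro f f'
      refine le_ciInf_add_ciInf fun p p' => ?_
      have htot : r p.1 p'.1 ∨ r p'.1 p.1 := by
        rcases eq_or_ne p.1 p'.1 with h | h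
        · left; rw [h]; exact fun f => le_rfl
        · exact hc p.2 p'.2 h
      rcases htot with h | h
      · exact (ciInf_le (hbb _) p').trans ((p'.1.2.add f f').trans (by gcongr; exact h f))
      · exact (ciInf_le (hbb _) p).trans ((p.1.2.add f f').trans (by gcongr; exact h f'))
    · intro a ha f
      rw [Real.mul_iInf_of_nonneg ha]
      exact congrArg iInf (funext fun p => p.1.2.smul a ha f)
    · intro g f
      exact congrArg iInf (funext fun p => p.1.2.inv g f)
    · intro f a h
      obtain ⟨p⟩ := (inferInstance : Nonempty c)
      exact (ciInf_le (hbb _) p).trans (p.1.2.bd f a h)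
    · intro p hp f
      exact ciInf_le (hbb f) ⟨p, hp⟩) (fun {a b c} h1 h2 f => (h2 f).trans (h1 f))
  exact ⟨m.1, m.2, fun p' hp' h => funext fun f => le_antisymm (h f) (hm ⟨p', hp'⟩ h f)⟩

/-- the compact convex set of linear functionals dominated by `p` -/
def KSet (p : LI G → ℝ) : Set (LI G → ℝ) :=
  {m | (∀ f f', m (f + f') = m f + m f') ∧ (∀ (c : ℝ) f, m (c • f) = c * m f) ∧ ∀ f, m f ≤ p f}

theorem KSet_isClosed (p : LI G → ℝ) : IsClosed (KSet p) := by
  have : KSet p = (⋂ f, ⋂ f', {m | m (f + f') = m f + m f'}) ∩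
      ((⋂ c : ℝ, ⋂ f, {m | m (c • f) = c * m f}) ∩ ⋂ f, {m | m f ≤ p f}) := by
    ext m; simp [KSet]
  rw [this]
  refine IsClosed.inter ?_ (IsClosed.inter ?_ ?_)
  · exact isClosed_iInter fun f => isClosed_iInter fun f' => isClosed_eq (by fun_prop) (by fun_prop)
  · exact isClosed_iInter fun f => isClosed_iInter fun f' => isClosed_eq (by fun_prop) (by fun_prop)
  · exact isClosed_iInter fun f => isClosed_le (by fun_prop) (by fun_prop)

theorem KSet_neg {p : LI G → ℝ} {m : LI G → ℝ} (hm : m ∈ KSet p) (f : LI G) : m (-f) = - m f := by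
  have := hm.2.1 (-1) f
  simpa using this

theorem KSet_isCompact (p : LI G → ℝ) : IsCompact (KSet p) := by
  refine IsCompact.of_isClosed_subset
    (isCompact_univ_pi (s := fun f => Set.Icc (- p (-f)) (p f)) fun f => isCompact_Icc)
    (KSet_isClosed p) ?_
  intro m hm f _
  refine ⟨?_, hm.2.2 f⟩
  have := hm.2.2 (-f)
  rw [KSet_neg hm] at this
  linarith

theorem KSet_nonempty {p : LI G → ℝ} (hp : SubL p) : (KSet p).Nonempty := by
  obtain ⟨L, hL, -⟩ := hahn_sub p hp.smul hp.add (0 : ℝ →ₗ[ℝ] LI G) 0 (fun f => by simp [hp.zero])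
  exact ⟨L, by simp, by simp, hL⟩

/-- action on functionals -/
def actF (g : G) (m : LI G → ℝ) : LI G → ℝ := fun f => m (translInfty g⁻¹ f)

theorem actF_mem {p : LI G → ℝ} (hp : SubL p) (g : G) {m : LI G → ℝ} (hm : m ∈ KSet p) :
    actF g m ∈ KSet p := by
  refine ⟨fun f f' => ?_, fun c f => ?_, fun f => ?_⟩
  · simp only [actF, tr_add, hm.1]
  · simp only [actF, tr_smul, hm.2.1]
  · exact (hm.2.2 _).trans (hp.inv _ _).le

theorem actF_cont (g : G) : Continuous (actF (G := G) g) :=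
  continuous_pi fun _ => continuous_apply _

theorem actF_mul (g h : G) (m : LI G → ℝ) : actF (g * h) m = actF g (actF h m) := by
  funext f; simp [actF, tr_tr]

theorem actF_one (m : LI G → ℝ) : actF 1 m = m := by
  funext f; simp [actF, tr_one]
section key
variable {X : Type*} [TopologicalSpace X] [CompactSpace X] [T2Space X] [MulAction G X]
  [ContinuousConstSMul G X] [MeasurableSpace X] [BorelSpace X]

theorem cm_integrable (F : C(X, ℝ)) (m : ProbabilityMeasure X) : Integrable F (m : Measure X) :=
  F.continuous.integrable_of_hasCompactSupport (HasCompactSupport.of_compactSpace F)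

theorem cm_abs_int_le (F : C(X, ℝ)) (m : ProbabilityMeasure X) :
    |∫ x, F x ∂(m : Measure X)| ≤ ‖F‖ := by
  have := norm_integral_le_of_norm_le_const (μ := (m : Measure X)) (f := F) (C := ‖F‖)
    (Filter.Eventually.of_forall fun x => F.norm_coe_le_norm x)
  simpa using this

/-- The Poisson-type transform `F ↦ (g ↦ ∫ F(gx) dμ(x))`. -/
def poisson (μ : ProbabilityMeasure X) : C(X, ℝ) →ₗ[ℝ] LI G where
  toFun F := mkLI (fun g => ∫ x, trC g F x ∂(μ : Measure X)) ‖F‖ (fun g => by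
    refine (cm_abs_int_le (trC g F) μ).trans ?_
    rw [ContinuousMap.norm_le _ (norm_nonneg _)]
    exact fun x => F.norm_coe_le_norm _)
  map_add' F F' := by
    apply LI_ext; intro g
    exact integral_add (cm_integrable (trC g F) μ) (cm_integrable (trC g F') μ)
  map_smul' c F := by
    apply LI_ext; intro g
    exact integral_const_mul c _

theorem poisson_apply (μ : ProbabilityMeasure X) (F : C(X, ℝ)) (g : G) :
    poisson μ F g = ∫ x, trC g F x ∂(μ : Measure X) := rfl

theorem poisson_le (μ : ProbabilityMeasure X) (F : C(X, ℝ)) (c : ℝ) (h : ∀ x, F x ≤ c) (g : G) :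
    poisson μ F g ≤ c := by
  rw [poisson_apply]
  have := integral_mono (cm_integrable (trC g F) μ) (integrable_const c) (fun x => h (g • x))
  simpa using this

/-- evaluation functions -/
def fhat (p : LI G → ℝ) (j : X → LI G → ℝ) (hj : ∀ f, Continuous fun x => j x f)
    (hK : ∀ x, j x ∈ KSet p) : LI G →ₗ[ℝ] C(X, ℝ) where
  toFun f := ⟨fun x => j x f, hj f⟩
  map_add' f f' := by ext x; exact (hK x).1 f f'
  map_smul' c f := by ext x; exact (hK x).2.1 c f

theorem key_state {p : LI G → ℝ} (hp : SubL p)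
    (hmin : ∀ p', SubL p' → (∀ f, p' f ≤ p f) → p' = p)
    {e : LI G → ℝ} (he : e ∈ (KSet p).extremePoints ℝ)
    (j : X → LI G → ℝ) (hj : ∀ f, Continuous fun x => j x f)
    (hK : ∀ x, j x ∈ KSet p) (heq : ∀ (g : G) x, j (g • x) = actF g (j x))
    (μ : ProbabilityMeasure X) :
    ∃ L : LI G →ₗ[ℝ] ℝ, (∀ u, L u ≤ supLI u) ∧
      ∀ f, L (poisson μ ((fhat p j hj hK f - ContinuousMap.const X (e f)) ^ 2)) = 0 := by
  set φ := fhat p j hj hK with hφ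
  have hφa : ∀ f x, φ f x = j x f := fun f x => rfl
  have hpb : SubL (fun f => supLI (poisson (G := G) μ (φ f))) := by
    refine ⟨fun f f' => ?_, fun c hc f => ?_, fun g f => ?_, fun f c hc => ?_⟩
    · simp only [map_add]; exact supLI_add _ _
    · simp only [map_smul]; exact supLI_smul c hc _
    · have : poisson (G := G) μ (φ (translInfty g f)) = translInfty g (poisson μ (φ f)) := by
        apply LI_ext; intro k
        rw [tr_apply, poisson_apply, poisson_apply]
        refine integral_congr_ae (Filter.Eventually.of_forall fun x => ?_)
        simp only [trC_apply, hφa, mul_smul, heq, actF, inv_inv]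
      rw [this]
      exact subL_sup.inv g _
    · refine supLI_le _ _ (poisson_le μ _ c fun x => ?_)
      exact ((hK x).2.2 f).trans (hp.bd f c hc)
  have hpe := hmin _ hpb (fun f => supLI_le _ _ (poisson_le μ _ _ fun x => (hK x).2.2 f))
  have heK := he.1
  let e' : LI G →ₗ[ℝ] ℝ := { toFun := e, map_add' := heK.1, map_smul' := heK.2.1 }
  obtain ⟨L, hL, hLe⟩ := hahn_sub supLI supLI_smul supLI_add ((poisson (G := G) μ) ∘ₗ φ) e'
    (fun f => by
      have := congrFun hpe f
      simp only [LinearMap.comp_apply]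
      rw [this]
      exact heK.2.2 f)
  have hLe' : ∀ f, L (poisson μ (φ f)) = e f := hLe
  refine ⟨L, hL, fun f => ?_⟩
  let ν : C(X, ℝ) →ₗ[ℝ] ℝ := L ∘ₗ (poisson (G := G) μ)
  have hνa : ∀ F, ν F = L (poisson μ F) := fun F => rfl
  have hν : ∀ F c, (∀ x, F x ≤ c) → ν F ≤ c := fun F c h =>
    (hL _).trans (supLI_le _ _ (poisson_le μ F c h))
  have hν1 : ∀ c : ℝ, ν (ContinuousMap.const X c) = c := by
    intro c
    refine le_antisymm (hν _ _ fun x => le_rfl) ?_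
    have := hν (-ContinuousMap.const X c) (-c) (fun x => le_rfl)
    rw [map_neg] at this
    linarith
  have hνm : ∀ F F' : C(X, ℝ), (∀ x, F x ≤ F' x) → ν F ≤ ν F' := by
    intro F F' h
    have := hν (F - F') 0 (fun x => by simpa using h x)
    rw [map_sub] at this
    linarith
  -- the perturbation
  have hpert : ∀ w : C(X, ℝ), (∀ x, 0 ≤ w x) → ν w = 1 → (fun f => ν (w * φ f)) ∈ KSet p := by
    intro w hw hw1
    refine ⟨fun f f' => ?_, fun c f => ?_, fun f => ?_⟩
    · simp only [map_add, mul_add]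
    · simp only [map_smul, mul_smul_comm, smul_eq_mul]
    · have h1 := hνm (w * φ f) (p f • w) (fun x => by
        have := mul_le_mul_of_nonneg_left ((hK x).2.2 f) (hw x)
        simpa [hφa, mul_comm] using this)
      rw [map_smul, hw1, smul_eq_mul, mul_one] at h1
      exact h1
  let d : C(X, ℝ) := φ f - ContinuousMap.const X (e f)
  have hd : ν d = 0 := by
    simp only [d, map_sub, hν1]
    rw [hνa, hLe', sub_self]
  let c : ℝ := (‖d‖ + 1)⁻¹
  have hc : 0 < c := inv_pos.2 (by positivity)
  have hcd : ∀ x, |c * d x| ≤ 1 := by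
    intro x
    rw [abs_mul, abs_of_pos hc]
    have h1 : |d x| ≤ ‖d‖ := d.norm_coe_le_norm x
    have : c * |d x| ≤ c * (‖d‖ + 1) := by gcongr; linarith
    rwa [inv_mul_cancel₀ (by positivity)] at this
  have hν11 : ν 1 = 1 := hν1 1
  have m1 := hpert (1 + c • d) (fun x => by
    have := (abs_le.1 (hcd x)).1
    simp only [ContinuousMap.add_apply, ContinuousMap.one_apply, ContinuousMap.smul_apply,
      smul_eq_mul]
    linarith) (by simp [hν11, hd])
  have m2 := hpert (1 - c • d) (fun x => by
    have := (abs_le.1 (hcd x)).2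
    simp only [ContinuousMap.sub_apply, ContinuousMap.one_apply, ContinuousMap.smul_apply,
      smul_eq_mul]
    linarith) (by simp [hν11, hd])
  have hmid : e ∈ openSegment ℝ (fun f => ν ((1 + c • d) * φ f)) (fun f => ν ((1 - c • d) * φ f)) := by
    refine ⟨1 / 2, 1 / 2, by norm_num, by norm_num, by norm_num, ?_⟩
    funext f'
    simp only [Pi.add_apply, Pi.smul_apply, smul_eq_mul, add_mul, sub_mul, map_add, map_sub,
      one_mul]
    rw [hνa (φ f'), hLe']
    ring
  have h3 := congrFun (he.2 m1 m2 hmid) f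
  simp only [add_mul, map_add, one_mul] at h3
  rw [hνa (φ f), hLe'] at h3
  have h4 : ν (d * φ f) = 0 := by
    have : c * ν (d * φ f) = 0 := by
      rw [smul_mul_assoc, map_smul, smul_eq_mul] at h3
      linarith
    rcases mul_eq_zero.1 this with h | h
    · exact absurd h hc.ne'
    · exact h
  have h5 : d ^ 2 = d * φ f - e f • d := by
    ext x
    simp [d]
    ring
  change ν (d ^ 2) = 0
  rw [h5, map_sub, map_smul, h4, hd]
  simp

theorem key_small {p : LI G → ℝ} (hp : SubL p)
    (hmin : ∀ p', SubL p' → (∀ f, p' f ≤ p f) → p' = p)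
    {e : LI G → ℝ} (he : e ∈ (KSet p).extremePoints ℝ)
    (j : X → LI G → ℝ) (hj : ∀ f, Continuous fun x => j x f) (hind : Topology.IsInducing j)
    (hK : ∀ x, j x ∈ KSet p) (heq : ∀ (g : G) x, j (g • x) = actF g (j x))
    (μ : ProbabilityMeasure X) (x0 : X) (hx0 : j x0 = e) (F : C(X, ℝ)) (hF0 : F x0 = 0) :
    ∃ g : G, ∫ x, F (g • x) ∂(μ : Measure X) < 1 := by
  obtain ⟨L, hL, hL0⟩ := key_state hp hmin he j hj hK heq μ
  by_contra! hcon
  have hU : {x | F x < 1 / 2} ∈ nhds x0 :=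
    (isOpen_lt F.continuous continuous_const).mem_nhds (by simp [hF0])
  rw [hind.nhds_eq_comap, Filter.mem_comap] at hU
  obtain ⟨W, hW, hWU⟩ := hU
  rw [nhds_pi, Filter.mem_pi] at hW
  obtain ⟨I, hI, t, ht, htW⟩ := hW
  have hδ : ∀ f, ∃ δ > 0, ∀ r, |r - e f| < δ → r ∈ t f := by
    intro f
    obtain ⟨δ, hδ, h⟩ := Metric.mem_nhds_iff.1 (ht f)
    refine ⟨δ, hδ, fun r hr => h ?_⟩
    rw [Metric.mem_ball, Real.dist_eq, hx0]
    exact hr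
  choose δ hδ0 hδ using hδ
  let dd : LI G → C(X, ℝ) := fun f => (fhat p j hj hK f - ContinuousMap.const X (e f)) ^ 2
  let S : C(X, ℝ) := ∑ f ∈ hI.toFinset, (‖F‖ / (δ f) ^ 2) • dd f
  have hddx : ∀ f x, dd f x = (j x f - e f) ^ 2 := fun f x => rfl
  have hterm : ∀ f x, 0 ≤ (‖F‖ / (δ f) ^ 2) * dd f x := fun f x => by
    rw [hddx]; positivity
  have hS : ∀ x, S x = ∑ f ∈ hI.toFinset, (‖F‖ / (δ f) ^ 2) * dd f x := by
    intro x; simp [S, ContinuousMap.sum_apply]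
  have hFS : ∀ x, (F - S) x ≤ 1 / 2 := by
    intro x
    rw [ContinuousMap.sub_apply, hS]
    by_cases hx : F x < 1 / 2
    · have := Finset.sum_nonneg (s := hI.toFinset) fun f _ => hterm f x
      linarith
    · have hnW : j x ∉ W := fun h => hx (hWU h)
      have : ∃ f ∈ I, ¬ |j x f - e f| < δ f := by
        by_contra! h
        exact hnW (htW fun f hf => hδ f _ (h f hf))
      obtain ⟨f, hf, hfx⟩ := this
      have h1 := Finset.single_le_sum (s := hI.toFinset)
        (f := fun f => (‖F‖ / (δ f) ^ 2) * dd f x) (fun f _ => hterm f x) (hI.mem_toFinset.2 hf)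
      have h2 : ‖F‖ ≤ (‖F‖ / (δ f) ^ 2) * dd f x := by
        rw [hddx, div_mul_eq_mul_div, le_div_iff₀ (pow_pos (hδ0 f) 2)]
        have h3 : (δ f) ^ 2 ≤ (j x f - e f) ^ 2 := by
          rw [← sq_abs (j x f - e f)]
          exact pow_le_pow_left₀ (hδ0 f).le (not_lt.1 hfx) 2
        exact mul_le_mul_of_nonneg_left h3 (norm_nonneg _)
      have h4 : F x ≤ ‖F‖ := (le_abs_self _).trans (F.norm_coe_le_norm x)
      linarith
  have hLS : L (poisson μ S) = 0 := by
    simp only [S, map_sum, map_smul]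
    exact Finset.sum_eq_zero fun f _ => by rw [hL0]; simp
  have h1 : L (poisson μ (F - S)) ≤ 1 / 2 := (hL _).trans (supLI_le _ _ (poisson_le μ _ _ hFS))
  rw [map_sub, map_sub, hLS, sub_zero] at h1
  have h2 : L (-poisson μ F) ≤ -1 := (hL _).trans (supLI_le _ _ fun g => by
    have := hcon g
    have h3 : poisson μ F g = ∫ x, F (g • x) ∂(μ : Measure X) := rfl
    simp only [lp.coeFn_neg, Pi.neg_apply, h3]
    linarith)
  rw [map_neg] at h2
  linarith

end key
set_option linter.style.haveILetI false

theorem actF_extreme {p : LI G → ℝ} (hp : SubL p) {e : LI G → ℝ}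
    (he : e ∈ (KSet p).extremePoints ℝ) (k : G) : actF k e ∈ (KSet p).extremePoints ℝ := by
  refine ⟨actF_mem hp k he.1, fun a ha b hb hab => ?_⟩
  have h1 : actF k⁻¹ a = e := by
    refine he.2 (actF_mem hp k⁻¹ ha) (actF_mem hp k⁻¹ hb) ?_
    obtain ⟨s, t, hs, ht, hst, h⟩ := hab
    refine ⟨s, t, hs, ht, hst, ?_⟩
    have h2 : actF k⁻¹ (actF k e) = e := by rw [← actF_mul, inv_mul_cancel, actF_one]
    rw [← h2, ← h]
    rfl
  rw [← h1, ← actF_mul, mul_inv_cancel, actF_one]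

variable (G) in
/-- The orbit closure of an extreme point as a set. -/
def OC (e : LI G → ℝ) : Set (LI G → ℝ) := closure (Set.range fun g : G => actF g e)

theorem OC_act (e : LI G → ℝ) (g : G) {m : LI G → ℝ} (hm : m ∈ OC G e) : actF g m ∈ OC G e := by
  refine map_mem_closure (actF_cont g) hm ?_
  rintro _ ⟨k, rfl⟩
  exact ⟨g * k, actF_mul g k e⟩

instance OC_mulAction (e : LI G → ℝ) : MulAction G (OC G e) where
  smul g m := ⟨actF g m.1, OC_act e g m.2⟩
  one_smul m := Subtype.ext (actF_one m.1)
  mul_smul g h m := Subtype.ext (actF_mul g h m.1)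

theorem OC_smul_coe (e : LI G → ℝ) (g : G) (m : OC G e) : (g • m).1 = actF g m.1 := rfl

instance OC_cont (e : LI G → ℝ) : ContinuousConstSMul G (OC G e) where
  continuous_const_smul g := Continuous.subtype_mk ((actF_cont g).comp continuous_subtype_val) _

theorem OC_sub {p : LI G → ℝ} (hp : SubL p) {e : LI G → ℝ} (he : e ∈ KSet p) :
    OC G e ⊆ KSet p := by
  refine closure_minimal ?_ (KSet_isClosed p)
  rintro _ ⟨g, rfl⟩
  exact actF_mem hp g he

theorem OC_bdry {p : LI G → ℝ} (hp : SubL p)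
    (hmin : ∀ p', SubL p' → (∀ f, p' f ≤ p f) → p' = p) {e : LI G → ℝ}
    (he : e ∈ (KSet p).extremePoints ℝ) [CompactSpace (OC G e)] : IsBoundary G (OC G e) := by
  refine ⟨⟨⟨actF 1 e, subset_closure ⟨1, rfl⟩⟩⟩, ?_⟩
  letI : MeasurableSpace (OC G e) := borel (OC G e)
  haveI : BorelSpace (OC G e) := ⟨rfl⟩
  intro μ x
  set S : Set (ProbabilityMeasure (OC G e)) := {ν : ProbabilityMeasure (OC G e) |
        ∃ g : G, ν = μ.map ((continuous_const_smul g).measurable.aemeasurable (μ := μ.toMeasure))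
          (f := (g • ·))} with hS
  change dirP x ∈ closure S
  have hcl : IsClosed {x : OC G e | dirP x ∈ closure S} :=
    isClosed_closure.preimage continuous_diracProba
  have hd : ∀ k : G, (⟨actF k e, subset_closure ⟨k, rfl⟩⟩ : OC G e) ∈
      {x : OC G e | dirP x ∈ closure S} := by
    intro k
    refine dirac_mem_closure S _ fun F _ hF0 => ?_
    obtain ⟨g, hg⟩ := key_small hp hmin (actF_extreme hp he k) (Subtype.val : OC G e → _)
      (fun f => (continuous_apply f).comp continuous_subtype_val) Topology.IsInducing.subtypeVal
      (fun x => OC_sub hp he.1 x.2) (fun g x => rfl) μ _ rfl F hF0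
    refine ⟨_, ⟨g, rfl⟩, ?_⟩
    rw [ProbabilityMeasure.toMeasure_map,
      integral_map (continuous_const_smul g).measurable.aemeasurable
        F.continuous.aestronglyMeasurable]
    exact hg
  have hdense : ∀ x : OC G e, x ∈ closure {x : OC G e | dirP x ∈ closure S} := by
    intro x
    rw [closure_subtype]
    refine closure_mono ?_ x.2
    rintro _ ⟨k, rfl⟩
    exact ⟨_, hd k, rfl⟩
  exact hcl.closure_subset (hdense x)

section furst
variable {Y : Type u} [TopologicalSpace Y] [CompactSpace Y] [T2Space Y] [MulAction G Y]
    [ContinuousConstSMul G Y]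

theorem furst_means (hY : IsFurstenberg G Y) :
    ∃ q : Y → (LI G →ₗ[ℝ] ℝ), (∀ f, Continuous fun y => q y f) ∧
      (∀ y f c, (∀ k, f k ≤ c) → q y f ≤ c) ∧
      ∀ (g : G) y f, q (g • y) f = q y (translInfty g⁻¹ f) := by
  obtain ⟨p, hp, hmin⟩ := exists_min_subL (G := G)
  obtain ⟨e, he⟩ := (KSet_isCompact p).extremePoints_nonempty (KSet_nonempty hp)
  haveI : CompactSpace (OC G e) := isCompact_iff_compactSpace.1
    ((KSet_isCompact p).of_isClosed_subset isClosed_closure (OC_sub hp he.1))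
  obtain ⟨q, hq, -, hqe⟩ := hY.2 (OC G e) _ _ _ _ _ (OC_bdry hp hmin he)
  have hK : ∀ y, (q y).1 ∈ KSet p := fun y => OC_sub hp he.1 (q y).2
  refine ⟨fun y => { toFun := (q y).1, map_add' := (hK y).1, map_smul' := (hK y).2.1 },
    fun f => (continuous_apply f).comp (continuous_subtype_val.comp hq),
    fun y f c h => ((hK y).2.2 f).trans (hp.bd f c h), fun g y f => ?_⟩
  change (q (g • y)).1 f = _
  rw [hqe]
  rfl

end furst
set_option linter.unusedSectionVars false
set_option linter.style.haveILetI false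
section topo
variable {Y : Type u} [TopologicalSpace Y] [CompactSpace Y] [T2Space Y] [MulAction G Y]
    [ContinuousConstSMul G Y]

/-- restriction of a continuous function to an orbit -/
def iotaY (x0 : Y) : C(Y, ℝ) →ₗ[ℝ] LI G where
  toFun f := mkLI (fun k => f (k • x0)) ‖f‖ (fun k => f.norm_coe_le_norm _)
  map_add' f f' := by apply LI_ext; intro g; rfl
  map_smul' c f := by apply LI_ext; intro g; rfl

theorem iotaY_apply (x0 : Y) (f : C(Y, ℝ)) (k : G) : iotaY x0 f k = f (k • x0) := rfl

variable (q : Y → (LI G →ₗ[ℝ] ℝ))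

theorem mean_ge (hb : ∀ y f c, (∀ k, f k ≤ c) → q y f ≤ c) (y : Y) (f : LI G) (c : ℝ)
    (h : ∀ k, c ≤ f k) : c ≤ q y f := by
  have := hb y (-f) (-c) (fun k => by simpa using h k)
  rw [map_neg] at this
  linarith

theorem mean_mono (hb : ∀ y f c, (∀ k, f k ≤ c) → q y f ≤ c) (y : Y) (f f' : LI G)
    (h : ∀ k, f k ≤ f' k) : q y f ≤ q y f' := by
  have := hb y (f - f') 0 (fun k => by simpa using h k)
  rw [map_sub] at this
  linarith

theorem mean_const (hb : ∀ y f c, (∀ k, f k ≤ c) → q y f ≤ c) (y : Y) (f : LI G) (c : ℝ)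
    (h : ∀ k, f k = c) : q y f = c :=
  le_antisymm (hb y f c fun k => (h k).le) (mean_ge q hb y f c fun k => (h k).ge)

theorem mean_iota (hB : IsBoundary G Y) (hc : ∀ f, Continuous fun y => q y f)
    (hb : ∀ y f c, (∀ k, f k ≤ c) → q y f ≤ c)
    (he : ∀ (g : G) y f, q (g • y) f = q y (translInfty g⁻¹ f)) (x0 z : Y) (f : C(Y, ℝ)) :
    q z (iotaY x0 f) = f z := by
  have htr : ∀ (g : G) y (F : C(Y, ℝ)), q y (iotaY x0 (trC g F)) = q (g • y) (iotaY x0 F) := by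
    intro g y F
    rw [he]
    congr 1
    apply LI_ext; intro k
    rw [tr_apply, iotaY_apply, iotaY_apply, trC_apply, inv_inv, mul_smul]
  by_contra hne
  set r := |q z (iotaY x0 f) - f z| with hr
  have hr0 : 0 < r := abs_pos.2 (sub_ne_zero.2 hne)
  let F : C(Y, ℝ) := ⟨fun w => |f w - f z|, by fun_prop⟩
  let H : C(Y, ℝ) := ⟨fun w => |q w (iotaY x0 f) - q z (iotaY x0 f)|,
    ((hc _).sub continuous_const).abs⟩
  let ev : C(Y, ℝ) →ₗ[ℝ] ℝ :=
    { toFun := fun f => f z, map_add' := fun _ _ => rfl, map_smul' := fun _ _ => rfl }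
  let L : C(Y, ℝ) →ₗ[ℝ] ℝ := (1 / 2 : ℝ) • (ev + (q z) ∘ₗ (iotaY x0))
  have hLa : ∀ F : C(Y, ℝ), L F = 1 / 2 * (F z + q z (iotaY x0 F)) := fun F => rfl
  have hpos : ∀ F : C(Y, ℝ), (∀ y, 0 ≤ F y) → 0 ≤ q z (iotaY x0 F) := fun F hF =>
    mean_ge q hb z _ 0 fun k => hF _
  obtain ⟨g, hg⟩ := bdry_state hB L (fun F hF => by
      rw [hLa]; have := hpos F hF; have := hF z; positivity)
    (by rw [hLa, mean_const q hb z (iotaY x0 1) 1 (fun k => rfl)]; norm_num) z (F + H)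
    (ε := r / 4) (by positivity)
  have h0 : (F + H) z = 0 := by simp [F, H]
  rw [h0, sub_zero] at hg
  have h1 := (abs_lt.1 hg).2
  rw [hLa, htr, map_add, map_add, trC_apply] at h1
  have h2 : |q (g • z) (iotaY x0 f) - f z| ≤ q (g • z) (iotaY x0 F) := by
    have e1 : f z = q (g • z) (iotaY x0 (ContinuousMap.const Y (f z))) :=
      (mean_const q hb _ _ _ fun k => rfl).symm
    have e2 : q (g • z) (iotaY x0 f) - f z =
        q (g • z) (iotaY x0 (f - ContinuousMap.const Y (f z))) := by
      rw [map_sub, map_sub, ← e1]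
    rw [e2, abs_le]
    constructor
    · rw [← map_neg]
      exact mean_mono q hb _ _ _ fun k => neg_abs_le (f (k • x0) - f z)
    · exact mean_mono q hb _ _ _ fun k => le_abs_self (f (k • x0) - f z)
  have h3 : 0 ≤ q (g • z) (iotaY x0 H) := mean_ge q hb _ _ 0 fun k => abs_nonneg _
  have h4 : (F + H) (g • z) = F (g • z) + |q (g • z) (iotaY x0 f) - q z (iotaY x0 f)| := rfl
  have h5 : 0 ≤ F (g • z) := abs_nonneg _
  have h6 := abs_sub_le (q z (iotaY x0 f)) (q (g • z) (iotaY x0 f)) (f z)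
  rw [abs_sub_comm (q z (iotaY x0 f)) (q (g • z) (iotaY x0 f))] at h6
  rw [h4] at h1
  linarith

theorem furst_ED (hY : IsFurstenberg G Y) (U V : Set Y) (hU : IsOpen U) (hV : IsOpen V)
    (hUV : Disjoint U V) : Disjoint (closure U) (closure V) := by
  obtain ⟨q, hc, hb, he⟩ := furst_means hY
  have hmi := mean_iota q hY.1 hc hb he
  obtain ⟨x0⟩ := hY.1.1
  classical
  let χ : LI G := mkLI (fun k => if k • x0 ∈ U then 1 else 0) 1
    (fun k => by split_ifs <;> simp)
  have hχ : ∀ k, χ k = if k • x0 ∈ U then 1 else 0 := fun k => rfl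
  have key : ∀ W : Set Y, IsOpen W → ∀ w ∈ W, ∃ f : C(Y, ℝ), f w = 1 ∧ (∀ y, f y ≤ 1) ∧
      (∀ y, 0 ≤ f y) ∧ ∀ y ∉ W, f y = 0 := by
    intro W hW w hw
    obtain ⟨f, h0, h1, h⟩ := exists_continuous_zero_one_of_isClosed (s := Wᶜ) (t := {w})
      hW.isClosed_compl isClosed_singleton (by simpa using hw)
    exact ⟨f, h1 rfl, fun y => (h y).2, fun y => (h y).1, fun y hy => h0 hy⟩
  have h1 : ∀ u ∈ U, q u χ = 1 := by
    intro u hu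
    obtain ⟨f, hf1, hf2, hf3, hf4⟩ := key U hU u hu
    refine le_antisymm (hb _ _ _ fun k => ?_) ?_
    · rw [hχ]; split_ifs <;> simp
    · rw [← hf1, ← hmi x0 u f]
      refine mean_mono q hb _ _ _ fun k => ?_
      rw [iotaY_apply, hχ]
      split_ifs with h
      · exact hf2 _
      · exact (hf4 _ h).le
  have h2 : ∀ v ∈ V, q v χ = 0 := by
    intro v hv
    obtain ⟨f, hf1, hf2, hf3, hf4⟩ := key V hV v hv
    refine le_antisymm ?_ (mean_ge q hb _ _ _ fun k => ?_)
    · have e1 : (0 : ℝ) = q v (iotaY x0 (1 - f)) := by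
        rw [hmi]; simp [hf1]
      rw [e1]
      refine mean_mono q hb _ _ _ fun k => ?_
      rw [iotaY_apply, hχ]
      split_ifs with h
      · have := hf4 _ (Set.disjoint_left.1 hUV h)
        simp [this]
      · have := hf2 (k • x0)
        simpa using this
    · rw [hχ]; split_ifs <;> simp
  have c1 : closure U ⊆ {y | q y χ = 1} :=
    closure_minimal h1 (isClosed_eq (hc χ) continuous_const)
  have c2 : closure V ⊆ {y | q y χ = 0} :=
    closure_minimal h2 (isClosed_eq (hc χ) continuous_const)
  rw [Set.disjoint_left]
  intro y hy1 hy2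
  have a1 := c1 hy1
  have a2 := c2 hy2
  simp only [Set.mem_ofPred_eq] at a1 a2
  linarith

theorem furst_fix_clopen (hY : IsFurstenberg G Y) (g : G) : IsClopen {y : Y | g • y = y} := by
  have hgc : Continuous fun y : Y => g • y := continuous_const_smul g
  have hgo : IsOpenMap fun y : Y => g • y := isOpenMap_smul g
  refine ⟨isClosed_eq hgc continuous_id, ?_⟩
  obtain ⟨U, hU⟩ := zorn_subset {U : Set Y | IsOpen U ∧ ∀ y ∈ U, g • y ∉ U} (by
    intro c hc hch
    refine ⟨⋃₀ c, ⟨isOpen_sUnion fun s hs => (hc hs).1, ?_⟩, fun s hs => Set.subset_sUnion_of_mem hs⟩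
    rintro y ⟨s, hs, hys⟩ ⟨t, ht, hyt⟩
    rcases hch.total hs ht with h | h
    · exact (hc ht).2 y (h hys) hyt
    · exact (hc hs).2 y hys (h hyt))
  obtain ⟨⟨hUo, hUg⟩, hUmax⟩ := hU
  have hcl : ∀ y ∈ closure U, g • y ∉ closure U := by
    intro y hy hgy
    have hd := furst_ED hY ((fun y : Y => g • y) '' U) U (hgo _ hUo) hUo (by
      rw [Set.disjoint_left]
      rintro _ ⟨u, hu, rfl⟩ h
      exact hUg u hu h)
    exact Set.disjoint_left.1 hd
      (map_mem_closure hgc hy (fun u hu => ⟨u, hu, rfl⟩)) hgy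
  have hclo : IsOpen (closure U) := by
    have hd := furst_ED hY U (closure U)ᶜ hUo isClosed_closure.isOpen_compl
      (Set.disjoint_left.2 fun y hy h => h (subset_closure hy))
    have : closure U = (closure (closure U)ᶜ)ᶜ := by
      refine Set.Subset.antisymm (fun y hy => Set.disjoint_left.1 hd hy) ?_
      exact Set.compl_subset_comm.1 subset_closure
    rw [this]
    exact isClosed_closure.isOpen_compl
  have hUc : IsClosed U := by
    have := hUmax ⟨hclo, hcl⟩ subset_closure
    have h2 : closure U = U := Set.Subset.antisymm this subset_closure
    rw [← h2]; exact isClosed_closure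
  have hcompl : {y : Y | g • y = y} = (U ∪ ((fun y => g • y) ⁻¹' U ∪ (fun y => g⁻¹ • y) ⁻¹' U))ᶜ := by
    ext y
    simp only [Set.mem_ofPred_eq, Set.mem_compl_iff, Set.mem_union, Set.mem_preimage]
    constructor
    · intro hy h
      have hy' : g⁻¹ • y = y := by rw [inv_smul_eq_iff, hy]
      rw [hy, hy'] at h
      have hyU : y ∈ U := by tauto
      exact hUg y hyU (by rwa [hy])
    · intro h
      by_contra hne
      push Not at h
      obtain ⟨h1, h2, h3⟩ := h
      obtain ⟨A, B, hA, hB, hyA, hyB, hAB⟩ := t2_separation hne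
      -- A nbhd of g y, B nbhd of y
      let W : Set Y := B ∩ (fun y => g • y) ⁻¹' A ∩ Uᶜ ∩ ((fun y => g • y) ⁻¹' Uᶜ) ∩
        ((fun y => g⁻¹ • y) ⁻¹' Uᶜ)
      have hW : IsOpen W := ((((hB.inter (hA.preimage hgc)).inter hUc.isOpen_compl).inter
        (hUc.isOpen_compl.preimage hgc)).inter
        (hUc.isOpen_compl.preimage (continuous_const_smul g⁻¹)))
      have hyW : y ∈ W := ⟨⟨⟨⟨hyB, hyA⟩, h1⟩, h2⟩, h3⟩
      refine h1 (hUmax (y := U ∪ W) ⟨hUo.union hW, ?_⟩ Set.subset_union_left (Or.inr hyW))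
      rintro w (hw | hw) (hgw | hgw)
      · exact hUg w hw hgw
      · exact hgw.2 (by simpa using hw)
      · exact hw.1.2 hgw
      · exact Set.disjoint_left.1 hAB hw.1.1.1.2 hgw.1.1.1.1
  rw [hcompl]
  exact (hUc.union ((hUc.preimage hgc).union
    (hUc.preimage (continuous_const_smul g⁻¹)))).isOpen_compl

theorem furst_stab_amenable (hY : IsFurstenberg G Y) (y : Y) :
    IsAmenable (MulAction.stabilizer G y) := by
  obtain ⟨q, hc, hb, he⟩ := furst_means hY
  set H := MulAction.stabilizer G y with hH
  -- right coset representatives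
  let R : Setoid G := MulAction.orbitRel H G
  have hs : ∀ g : G, ∃ h : H, h • (Quotient.out (Quotient.mk R g) : G) = g := by
    intro g
    have : R (Quotient.out (Quotient.mk R g)) g := Quotient.mk_out (s := R) g
    have h2 : R g (Quotient.out (Quotient.mk R g)) := R.symm this
    exact h2
  choose r hr using hs
  have hrmul : ∀ (h : H) (g : G), r ((h : G) * g) = h * r g := by
    intro h g
    have hq : Quotient.mk R ((h : G) * g) = Quotient.mk R g :=
      Quotient.sound (s := R) ⟨h, rfl⟩
    have h1 := hr ((h : G) * g)
    rw [hq] at h1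
    have h2 := hr g
    apply Subtype.ext
    simp only [Subgroup.smul_def, smul_eq_mul, Subgroup.coe_mul] at h1 h2 ⊢
    have h3 : (r ((h : G) * g) : G) * (Quotient.out (Quotient.mk R g) : G) =
        (h : G) * (r g : G) * (Quotient.out (Quotient.mk R g) : G) := by
      rw [h1, mul_assoc, h2]
    exact mul_right_cancel h3
  let pull : lp (fun _ : H => ℝ) ∞ →ₗ[ℝ] LI G :=
    { toFun := fun f => mkLI (fun g => f (r g)) ‖f‖ (fun g => LI_abs_le f _)
      map_add' := fun f f' => by apply LI_ext; intro g; rfl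
      map_smul' := fun c f => by apply LI_ext; intro g; rfl }
  have hpull : ∀ f g, pull f g = f (r g) := fun f g => rfl
  refine ⟨(q y) ∘ₗ pull, mean_const q hb y _ 1 fun g => rfl,
    fun f hf => mean_ge q hb y _ 0 fun k => hf _, fun h f => ?_⟩
  simp only [LinearMap.comp_apply]
  have h1 : ((h⁻¹ : H) : G) • y = y := (h⁻¹).2
  conv_rhs => rw [← h1]
  rw [he]
  congr 1
  apply LI_ext; intro k
  change f (h⁻¹ * r k) = f (r (((h⁻¹ : H) : G)⁻¹⁻¹ * k))
  rw [← hrmul, inv_inv]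

theorem furst_minimal (hY : IsBoundary G Y) (x y : Y) (U : Set Y) (hU : IsOpen U) (hx : x ∈ U) :
    ∃ g : G, g • y ∈ U := by
  obtain ⟨f, h0, h1, h⟩ := exists_continuous_zero_one_of_isClosed (s := Uᶜ) (t := {x})
      hU.isClosed_compl isClosed_singleton (by simpa using hx)
  let ev : C(Y, ℝ) →ₗ[ℝ] ℝ :=
    { toFun := fun f => f y, map_add' := fun _ _ => rfl, map_smul' := fun _ _ => rfl }
  obtain ⟨g, hg⟩ := bdry_state hY ev (fun F hF => hF y) rfl x f (ε := 1) one_pos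
  refine ⟨g, ?_⟩
  by_contra hn
  have e1 : ev (trC g f) = 0 := h0 hn
  have e2 : f x = 1 := h1 rfl
  rw [e1, e2] at hg
  norm_num at hg

theorem conj_stab (g : G) (x : Y) :
    conjSub g (MulAction.stabilizer G x) = MulAction.stabilizer G (g • x) :=
  (MulAction.stabilizer_smul_eq_stabilizer_map_conj g x).symm

theorem furst_stab_cont (hY : IsFurstenberg G Y) :
    Continuous (fun x : Y => MulAction.stabilizer G x) := by
  refine continuous_induced_rng.2 ?_
  refine continuous_pi fun g => ?_
  have hclo := furst_fix_clopen hY g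
  rw [continuous_discrete_rng]
  intro b
  cases b with
  | true =>
    convert hclo.isOpen using 1
    ext y; simp
  | false =>
    convert hclo.compl.isOpen using 1
    ext y; simp

theorem chabauty_t2 : T2Space (Subgroup G) := by
  classical
  let j : Subgroup G → (G → Bool) := fun H g => @decide (g ∈ H) (Classical.propDecidable _)
  have hj : Continuous j := continuous_induced_dom
  refine T2Space.of_injective_continuous (f := j) ?_ hj
  intro H K h
  ext g
  have := congrFun h g
  simpa [j] using this

theorem furst_urs (hY : IsFurstenberg G Y) :
    IsURS G {H : Subgroup G | ∃ x : Y, H = MulAction.stabilizer G x} := by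
  have hc := furst_stab_cont hY
  have hr : {H : Subgroup G | ∃ x : Y, H = MulAction.stabilizer G x} =
      Set.range (fun x : Y => MulAction.stabilizer G x) := by
    ext H; simp [eq_comm]
  haveI : T2Space (Subgroup G) := chabauty_t2
  refine ⟨?_, ?_, ?_, ?_⟩
  · obtain ⟨x⟩ := hY.1.1
    exact ⟨_, x, rfl⟩
  · rw [hr]
    exact (isCompact_range hc).isClosed
  · rintro g _ ⟨x, rfl⟩
    exact ⟨g • x, conj_stab g x⟩
  · rintro _ ⟨x, rfl⟩ _ ⟨y, rfl⟩
    rw [mem_closure_iff]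
    intro O hO hyO
    obtain ⟨g, hg⟩ := furst_minimal hY.1 y x _ (hO.preimage hc) hyO
    exact ⟨_, hg, g, (conj_stab g x).symm⟩

end topo
section ops
variable {ι : Type*}

theorem l2_hasSum (f : ℓ²(ι, ℂ)) : HasSum (fun i => ‖f i‖ ^ 2) (‖f‖ ^ 2) := by
  have := lp.hasSum_norm (p := 2) (by norm_num) f
  simpa using this

theorem l2_mem (f : ι → ℂ) (h : Summable fun i => ‖f i‖ ^ 2) : Memℓp f 2 := by
  apply memℓp_gen
  simpa using h

theorem l2_norm_le {κ : Type*} (f : ℓ²(ι, ℂ)) (ξ : ℓ²(κ, ℂ)) (C s : ℝ) (hC : 0 ≤ C)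
    (b : ι → ℝ) (hb : HasSum b s) (hs : s ≤ C ^ 2 * ‖ξ‖ ^ 2) (h : ∀ i, ‖f i‖ ^ 2 ≤ b i) :
    ‖f‖ ≤ C * ‖ξ‖ := by
  have h1 := hasSum_le h (l2_hasSum f) hb
  refine le_of_sq_le_sq ?_ (by positivity)
  rw [mul_pow]
  exact h1.trans hs

/-- multiplication operator on `ℓ²` -/
def diagOp (m : ι → ℝ) (C : ℝ) (hm : ∀ i, |m i| ≤ C) : ℓ²(ι, ℂ) →L[ℂ] ℓ²(ι, ℂ) :=
  LinearMap.mkContinuous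
    { toFun := fun ξ => ⟨fun i => (m i : ℂ) * ξ i, l2_mem _ (by
        refine Summable.of_nonneg_of_le (fun i => by positivity) (fun i => ?_)
          ((l2_hasSum ξ).summable.mul_left (C ^ 2))
        rw [norm_mul, mul_pow, Complex.norm_real, Real.norm_eq_abs]
        have := hm i
        gcongr)⟩
      map_add' := fun ξ η => by ext i; exact mul_add _ _ _
      map_smul' := fun c ξ => by ext i; exact mul_left_comm _ _ _ } (max C 0) (fun ξ => by
    refine l2_norm_le _ ξ (max C 0) _ (le_max_right _ _) _
      ((l2_hasSum ξ).mul_left ((max C 0) ^ 2)) le_rfl (fun i => ?_)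
    change ‖(m i : ℂ) * ξ i‖ ^ 2 ≤ _
    rw [norm_mul, mul_pow, Complex.norm_real, Real.norm_eq_abs]
    have := (hm i).trans (le_max_left C 0)
    gcongr)

theorem diagOp_apply (m : ι → ℝ) (C : ℝ) (hm : ∀ i, |m i| ≤ C) (ξ : ℓ²(ι, ℂ)) (i : ι) :
    diagOp m C hm ξ i = (m i : ℂ) * ξ i := rfl

theorem diagOp_norm_le (m : ι → ℝ) (C : ℝ) (hm : ∀ i, |m i| ≤ C) (hC : 0 ≤ C) :
    ‖diagOp m C hm‖ ≤ C :=
  (LinearMap.mkContinuous_norm_le _ (le_max_right _ _) _).trans (by simp [hC])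

/-- permutation operator on `ℓ²` -/
def permOp (e : Equiv.Perm ι) : ℓ²(ι, ℂ) →L[ℂ] ℓ²(ι, ℂ) :=
  LinearMap.mkContinuous
    { toFun := fun ξ => ⟨fun i => ξ (e.symm i),
        l2_mem _ (e.symm.summable_iff.2 (l2_hasSum ξ).summable)⟩
      map_add' := fun ξ η => by ext i; rfl
      map_smul' := fun c ξ => by ext i; rfl } 1 (fun ξ => by
    refine l2_norm_le _ ξ 1 _ zero_le_one _ (e.symm.hasSum_iff.2 (l2_hasSum ξ)) (by simp)
      (fun i => ?_)
    exact le_rfl)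

theorem permOp_apply (e : Equiv.Perm ι) (ξ : ℓ²(ι, ℂ)) (i : ι) :
    permOp e ξ i = ξ (e.symm i) := rfl

theorem permOp_norm_le (e : Equiv.Perm ι) : ‖permOp e‖ ≤ 1 :=
  LinearMap.mkContinuous_norm_le _ zero_le_one _

theorem permOp_norm_apply (e : Equiv.Perm ι) (ξ : ℓ²(ι, ℂ)) : ‖permOp e ξ‖ = ‖ξ‖ := by
  have h := (l2_hasSum (permOp e ξ)).unique (e.symm.hasSum_iff.2 (l2_hasSum ξ))
  exact (sq_eq_sq₀ (norm_nonneg _) (norm_nonneg _)).1 h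

theorem permOp_mul (e e' : Equiv.Perm ι) : permOp (e * e') = permOp e * permOp e' := by
  ext ξ i; rfl

theorem permOp_one : permOp (1 : Equiv.Perm ι) = 1 := by
  ext ξ i; rfl

theorem permOp_star (e : Equiv.Perm ι) : star (permOp e) = permOp e⁻¹ := by
  rw [ContinuousLinearMap.star_eq_adjoint]
  symm
  rw [ContinuousLinearMap.eq_adjoint_iff]
  intro x y
  rw [lp.inner_eq_tsum, lp.inner_eq_tsum]
  conv_rhs => rw [← e.tsum_eq]
  refine tsum_congr fun i => ?_
  rw [permOp_apply, permOp_apply, Equiv.symm_apply_apply]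
  rfl

theorem op_norm_le_of_sq (T : ℓ²(ι, ℂ) →L[ℂ] ℓ²(ι, ℂ)) (C : ℝ) (hC : 0 ≤ C)
    (h : ∀ ξ, ∃ b : ι → ℝ, ∃ s, HasSum b s ∧ s ≤ C ^ 2 * ‖ξ‖ ^ 2 ∧ ∀ i, ‖T ξ i‖ ^ 2 ≤ b i) :
    ‖T‖ ≤ C := by
  refine T.opNorm_le_bound hC fun ξ => ?_
  obtain ⟨b, s, h1, h2, h3⟩ := h ξ
  exact l2_norm_le _ ξ C s hC b h1 h2 h3

theorem pert_bound (m : ι → ℝ) (C : ℝ) (hm : ∀ i, |m i| ≤ C) (h0 : ∀ i, 0 ≤ m i)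
    (h1 : ∀ i, m i ≤ 1) (U : Set ι) (hU : ∀ i ∉ U, m i = 0) (e : Equiv.Perm ι)
    (he : ∀ i ∈ U, e i ∉ U) (c : ℂ) : ‖diagOp m C hm + c • permOp e‖ ≤ 1 + ‖c‖ ^ 2 := by
  classical
  refine op_norm_le_of_sq _ _ (by positivity) fun ξ => ?_
  let A : ι → ℝ := fun i => if i ∈ U then ‖ξ i‖ ^ 2 else 0
  have hA : Summable A := by
    refine Summable.of_nonneg_of_le (fun i => ?_) (fun i => ?_) (l2_hasSum ξ).summable
    · simp only [A]; split_ifs <;> positivity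
    · simp only [A]; split_ifs
      · exact le_rfl
      · positivity
  have s1 := hA.hasSum
  have s2 := e.symm.hasSum_iff.2 s1
  have s3 := l2_hasSum ξ
  have s4 := e.symm.hasSum_iff.2 s3
  refine ⟨_, _, ((s1.add s4).sub s2).add ((s3.add s4).mul_left (‖c‖ ^ 2)), ?_, fun i => ?_⟩
  · have : 0 ≤ ‖c‖ ^ 4 * ‖ξ‖ ^ 2 := by positivity
    nlinarith
  · change ‖(m i : ℂ) * ξ i + c * ξ (e.symm i)‖ ^ 2 ≤ A i + ‖ξ (e.symm i)‖ ^ 2 - A (e.symm i) +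
      ‖c‖ ^ 2 * (‖ξ i‖ ^ 2 + ‖ξ (e.symm i)‖ ^ 2)
    have hA1 : A (e.symm i) ≤ ‖ξ (e.symm i)‖ ^ 2 := by
      simp only [A]; split_ifs
      · exact le_rfl
      · positivity
    set a := ‖ξ i‖
    set b := ‖ξ (e.symm i)‖
    have ha : 0 ≤ a := norm_nonneg _
    have hb : 0 ≤ b := norm_nonneg _
    have hc := norm_nonneg c
    by_cases hi : i ∈ U
    · have hn : e.symm i ∉ U := fun h => he _ h (by simpa using hi)
      have e1 : A i = a ^ 2 := if_pos hi
      have e2 : A (e.symm i) = 0 := if_neg hn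
      rw [e1, e2]
      have h3 : ‖(m i : ℂ) * ξ i + c * ξ (e.symm i)‖ ≤ a + ‖c‖ * b := by
        refine (norm_add_le _ _).trans ?_
        rw [norm_mul, norm_mul, Complex.norm_real, Real.norm_eq_abs, abs_of_nonneg (h0 i)]
        have := mul_le_mul_of_nonneg_right (h1 i) ha
        linarith
      have h4 := pow_le_pow_left₀ (norm_nonneg _) h3 2
      nlinarith [sq_nonneg (‖c‖ * a - b)]
    · have e1 : A i = 0 := if_neg hi
      have h3 : ‖(m i : ℂ) * ξ i + c * ξ (e.symm i)‖ = ‖c‖ * b := by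
        rw [hU i hi]; simp [b]
      rw [h3, e1]
      nlinarith [mul_nonneg (sq_nonneg ‖c‖) (sq_nonneg a)]

/-- multiplication by the pullback of a continuous function -/
def mulC {Y : Type*} [TopologicalSpace Y] [CompactSpace Y] (o : ι → Y) :
    C(Y, ℝ) →ₗ[ℝ] (ℓ²(ι, ℂ) →L[ℂ] ℓ²(ι, ℂ)) where
  toFun F := diagOp (fun i => F (o i)) ‖F‖ (fun i => F.norm_coe_le_norm _)
  map_add' F F' := by
    ext ξ i
    change ((F (o i) + F' (o i) : ℝ) : ℂ) * ξ i = (F (o i) : ℂ) * ξ i + (F' (o i) : ℂ) * ξ i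
    push_cast; ring
  map_smul' c F := by
    ext ξ i
    change ((c * F (o i) : ℝ) : ℂ) * ξ i = (c : ℂ) * ((F (o i) : ℂ) * ξ i)
    push_cast; ring

theorem mulC_apply {Y : Type*} [TopologicalSpace Y] [CompactSpace Y] (o : ι → Y) (F : C(Y, ℝ))
    (ξ : ℓ²(ι, ℂ)) (i : ι) : mulC o F ξ i = (F (o i) : ℂ) * ξ i := rfl

/-- the state on `C(Y)` obtained from a unital contractive functional -/
def stC {Y : Type*} [TopologicalSpace Y] [CompactSpace Y] (o : ι → Y)
    (φ : StrongDual ℂ (ℓ²(ι, ℂ) →L[ℂ] ℓ²(ι, ℂ))) : C(Y, ℝ) →ₗ[ℝ] ℝ where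
  toFun F := (φ (mulC o F)).re
  map_add' F F' := by simp
  map_smul' c F := by
    rw [map_smul, show c • mulC o F = (c : ℂ) • mulC o F from rfl, map_smul]
    simp

theorem stC_apply {Y : Type*} [TopologicalSpace Y] [CompactSpace Y] (o : ι → Y)
    (φ : StrongDual ℂ (ℓ²(ι, ℂ) →L[ℂ] ℓ²(ι, ℂ))) (F : C(Y, ℝ)) :
    stC o φ F = (φ (mulC o F)).re := rfl

theorem mulC_one {Y : Type*} [TopologicalSpace Y] [CompactSpace Y] (o : ι → Y) :
    mulC o (1 : C(Y, ℝ)) = 1 := by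
  ext ξ i
  rw [mulC_apply]; simp

theorem re_le_of_norm {E : Type*} [NormedAddCommGroup E] [NormedSpace ℂ E]
    (φ : StrongDual ℂ E) (h : ‖φ‖ ≤ 1) (x : E) (C : ℝ) (hx : ‖x‖ ≤ C) : (φ x).re ≤ C := by
  refine (Complex.re_le_norm _).trans ((φ.le_opNorm x).trans ?_)
  have := norm_nonneg x
  nlinarith

theorem stC_one {Y : Type*} [TopologicalSpace Y] [CompactSpace Y] (o : ι → Y)
    (φ : StrongDual ℂ (ℓ²(ι, ℂ) →L[ℂ] ℓ²(ι, ℂ))) (h1 : φ 1 = 1) : stC o φ 1 = 1 := by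
  rw [stC_apply, mulC_one, h1]; rfl

theorem stC_pos {Y : Type*} [TopologicalSpace Y] [CompactSpace Y] (o : ι → Y)
    (φ : StrongDual ℂ (ℓ²(ι, ℂ) →L[ℂ] ℓ²(ι, ℂ))) (hφ : ‖φ‖ ≤ 1) (h1 : φ 1 = 1)
    (F : C(Y, ℝ)) (hF : ∀ y, 0 ≤ F y) : 0 ≤ stC o φ F := by
  have h2 : ‖mulC o (‖F‖ • (1 : C(Y, ℝ)) - F)‖ ≤ ‖F‖ := by
    have h3 : ∀ i, |(‖F‖ • (1 : C(Y, ℝ)) - F) (o i)| ≤ ‖F‖ := fun i => by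
      have a1 := hF (o i)
      have a2 : F (o i) ≤ ‖F‖ := (le_abs_self _).trans (F.norm_coe_le_norm _)
      simp only [ContinuousMap.sub_apply, ContinuousMap.smul_apply, ContinuousMap.one_apply,
        smul_eq_mul, mul_one]
      rw [abs_le]; constructor <;> linarith
    have : mulC o (‖F‖ • (1 : C(Y, ℝ)) - F) = diagOp _ ‖F‖ h3 := by ext ξ i; rfl
    rw [this]
    exact diagOp_norm_le _ _ _ (norm_nonneg _)
  have h4 := re_le_of_norm φ hφ _ _ h2
  rw [← stC_apply, map_sub, map_smul, stC_one o φ h1, smul_eq_mul] at h4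
  linarith

theorem star_adjoin_span {A : Type*} [Ring A] [StarRing A] [Algebra ℂ A] [StarModule ℂ A]
    (w : G →* A) (hw : ∀ g, star (w g) = w g⁻¹) (x : A)
    (hx : x ∈ StarAlgebra.adjoin ℂ (Set.range w)) : x ∈ Submodule.span ℂ (Set.range w) := by
  have h1 : x ∈ Subalgebra.toSubmodule (StarAlgebra.adjoin ℂ (Set.range w)).toSubalgebra := hx
  rw [StarAlgebra.adjoin_eq_span] at h1
  refine Submodule.span_mono ?_ h1
  have : Submonoid.closure (Set.range w ∪ star (Set.range w)) ≤ MonoidHom.mrange w := by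
    rw [Submonoid.closure_le]
    rintro y (⟨g, rfl⟩ | ⟨g, hg⟩)
    · exact ⟨g, rfl⟩
    · refine ⟨g⁻¹, ?_⟩
      rw [← hw, hg, star_star]
  exact fun y hy => this hy

end ops
section simple

theorem lreg_apply (g : G) (ξ : ℓ²(G, ℂ)) (h : G) : lreg g ξ h = ξ (g⁻¹ * h) := by
  unfold lreg lregE
  rfl

theorem lreg_eq (g : G) : lreg g = permOp (Equiv.mulLeft g) := by
  ext ξ h
  rw [lreg_apply, permOp_apply]
  rfl

variable (G) in
/-- the regular representation as a monoid homomorphism -/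
def lregHom : G →* (ℓ²(G, ℂ) →L[ℂ] ℓ²(G, ℂ)) where
  toFun := lreg
  map_one' := by
    ext ξ h
    rw [lreg_apply]; simp
  map_mul' g k := by
    ext ξ h
    rw [ContinuousLinearMap.mul_apply, lreg_apply, lreg_apply, lreg_apply]
    congr 1
    group

theorem lregHom_apply (g : G) : lregHom G g = lreg g := rfl

theorem lreg_star (g : G) : star (lreg g) = lreg g⁻¹ := by
  rw [lreg_eq, lreg_eq, permOp_star]
  congr 1
  ext x
  simp

theorem lreg_norm_le (g : G) : ‖lreg g‖ ≤ 1 := by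
  rw [lreg_eq]; exact permOp_norm_le _

theorem lreg_mem (g : G) : lreg g ∈ redCstar G := by
  unfold redCstar
  exact (StarSubalgebra.le_topologicalClosure _) (StarAlgebra.subset_adjoin ℂ _ ⟨g, rfl⟩)

theorem redCstar_closed : IsClosed ((redCstar G : StarSubalgebra ℂ _) : Set (ℓ²(G, ℂ) →L[ℂ] ℓ²(G, ℂ))) := by
  unfold redCstar
  exact StarSubalgebra.isClosed_topologicalClosure _

theorem span_finsupp {A : Type*} [AddCommGroup A] [Module ℂ A] (w : G → A) (x : A)
    (hx : x ∈ Submodule.span ℂ (Set.range w)) : ∃ b : G →₀ ℂ, x = b.sum fun g a => a • w g := by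
  obtain ⟨b, hb⟩ := (Finsupp.mem_span_range_iff_exists_finsupp).1 hx
  exact ⟨b, hb.symm⟩

theorem redCstar_sub (T : ℓ²(G, ℂ) →L[ℂ] ℓ²(G, ℂ)) (hT : T ∈ redCstar G) :
    T ∈ closure (Submodule.span ℂ (Set.range (lreg (G := G))) : Set _) := by
  unfold redCstar at hT
  have h1 : T ∈ closure ((StarAlgebra.adjoin ℂ (Set.range (lreg (G := G))) :
    StarSubalgebra ℂ _) : Set (ℓ²(G, ℂ) →L[ℂ] ℓ²(G, ℂ))) := hT
  exact closure_mono (fun x hx => star_adjoin_span (lregHom G) lreg_star x hx) h1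

theorem redCstar_approx (T : ℓ²(G, ℂ) →L[ℂ] ℓ²(G, ℂ)) (hT : T ∈ redCstar G) (ε : ℝ) (hε : 0 < ε) :
    ∃ b : G →₀ ℂ, ‖T - b.sum fun g a => a • lreg g‖ < ε := by
  obtain ⟨x, hx, hd⟩ := Metric.mem_closure_iff.1 (redCstar_sub T hT) ε hε
  obtain ⟨b, rfl⟩ := span_finsupp _ _ hx
  exact ⟨b, by rwa [dist_eq_norm] at hd⟩

open Classical in
/-- the basis vector -/
def dl {ι : Type*} (g : ι) : ℓ²(ι, ℂ) := lp.single 2 g (1 : ℂ)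

theorem dl_apply {ι : Type*} [DecidableEq ι] (g h : ι) :
    (dl g : ℓ²(ι, ℂ)) h = if h = g then 1 else 0 := by
  have : (dl g : ℓ²(ι, ℂ)) h = @ite ℂ (h = g) (Classical.propDecidable _) 1 0 := by
    classical
    unfold dl
    rw [@lp.single_apply, @Pi.single_apply]
  rw [this]
  split_ifs <;> rfl

theorem dl_norm {ι : Type*} (g : ι) : ‖dl g‖ = 1 := by
  classical
  unfold dl
  rw [@lp.norm_single _ _ _ _ _ (by norm_num)]; simp

theorem inner_dl {ι : Type*} (g : ι) (ξ : ℓ²(ι, ℂ)) : inner ℂ (dl g) ξ = ξ g := by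
  classical
  unfold dl
  rw [@lp.inner_single_left]; simp

theorem lreg_dl (k g : G) : lreg k (dl g) = dl (k * g) := by
  classical
  ext h
  rw [lreg_apply, dl_apply, dl_apply]
  simp [inv_mul_eq_iff_eq_mul]

theorem apply_clm_cont {ι : Type*} (i : ι) : Continuous fun ξ : ℓ²(ι, ℂ) => ξ i :=
  (lp.lipschitzWith_one_eval 2 i).continuous

theorem redCstar_equiv (T : ℓ²(G, ℂ) →L[ℂ] ℓ²(G, ℂ)) (hT : T ∈ redCstar G) (g h : G) :
    T (dl g) h = T (dl 1) (h * g⁻¹) := by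
  classical
  let S : Submodule ℂ (ℓ²(G, ℂ) →L[ℂ] ℓ²(G, ℂ)) :=
    { carrier := {T | T (dl g) h = T (dl 1) (h * g⁻¹)}
      add_mem' := fun {a b} ha hb => by
        change a (dl g) h + b (dl g) h = a (dl 1) (h * g⁻¹) + b (dl 1) (h * g⁻¹)
        rw [ha, hb]
      zero_mem' := rfl
      smul_mem' := fun c a ha => by
        change c * a (dl g) h = c * a (dl 1) (h * g⁻¹)
        rw [ha] }
  have hS : IsClosed (S : Set (ℓ²(G, ℂ) →L[ℂ] ℓ²(G, ℂ))) :=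
    isClosed_eq ((apply_clm_cont h).comp (by fun_prop)) ((apply_clm_cont _).comp (by fun_prop))
  have h1 : Submodule.span ℂ (Set.range (lreg (G := G))) ≤ S := by
    rw [Submodule.span_le]
    rintro _ ⟨k, rfl⟩
    change lreg k (dl g) h = lreg k (dl 1) (h * g⁻¹)
    rw [lreg_dl, lreg_dl, dl_apply, dl_apply]
    simp [mul_inv_eq_iff_eq_mul]
  exact closure_minimal h1 hS (redCstar_sub T hT)

theorem op_ext_dl {ι : Type*} {E : Type*} [NormedAddCommGroup E] [NormedSpace ℂ E]
    (T T' : ℓ²(ι, ℂ) →L[ℂ] E) (h : ∀ i, T (dl i) = T' (dl i)) : T = T' := by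
  classical
  ext ξ
  have h1 := lp.hasSum_single (p := 2) (by norm_num) ξ
  refine (h1.mapL T).unique ?_
  convert h1.mapL T' using 2 with i
  have : (lp.single 2 i (ξ i) : ℓ²(ι, ℂ)) = ξ i • dl i := by
    ext j
    rw [lp.coeFn_smul, Pi.smul_apply, dl_apply, lp.single_apply, Pi.single_apply]
    split_ifs with hj
    · subst hj; simp
    · simp
  rw [this, map_smul, map_smul, h]

theorem redCstar_zero (T : ℓ²(G, ℂ) →L[ℂ] ℓ²(G, ℂ)) (hT : T ∈ redCstar G) (h : T (dl 1) = 0) :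
    T = 0 := by
  refine op_ext_dl _ _ fun i => ?_
  ext k
  rw [redCstar_equiv T hT, h]
  rfl

theorem exists_state_kill {E : Type*} [NormedAddCommGroup E] [NormedSpace ℂ E]
    (S : Submodule ℂ E) (a : E) (ha : ‖a‖ ≤ 1) (h : ∀ s ∈ S, 1 ≤ ‖a - s‖) :
    ∃ φ : StrongDual ℂ E, ‖φ‖ ≤ 1 ∧ φ a = 1 ∧ ∀ s ∈ S, φ s = 0 := by
  obtain ⟨ψ, hψ, hψa⟩ := exists_dual_vector'' ℂ (Submodule.Quotient.mk (p := S) a)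
  have hle : ∀ x : E, ‖(Submodule.Quotient.mk x : E ⧸ S)‖ ≤ ‖x‖ := fun x =>
    Submodule.Quotient.norm_mk_le S x
  have hna : ‖(Submodule.Quotient.mk a : E ⧸ S)‖ = 1 := by
    refine le_antisymm ((hle a).trans ha) ?_
    refine le_of_forall_pos_lt_add fun ε hε => ?_
    obtain ⟨m, hm, hlt⟩ := Submodule.Quotient.norm_mk_lt (Submodule.Quotient.mk a : E ⧸ S) hε
    refine lt_of_le_of_lt ?_ hlt
    have h1 : a - m ∈ S := (Submodule.Quotient.eq S).1 hm.symm
    have := h _ h1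
    rwa [sub_sub_cancel] at this
  have hb : ∀ x : E, ‖(ψ.toLinearMap ∘ₗ S.mkQ) x‖ ≤ 1 * ‖x‖ := fun x => by
    have h1 := ψ.le_opNorm (Submodule.Quotient.mk x)
    have h2 := hle x
    have h3 := norm_nonneg (Submodule.Quotient.mk x : E ⧸ S)
    calc ‖ψ (Submodule.Quotient.mk x)‖ ≤ _ := h1
      _ ≤ 1 * ‖x‖ := by gcongr
  refine ⟨LinearMap.mkContinuous (ψ.toLinearMap ∘ₗ S.mkQ) 1 hb,
    LinearMap.mkContinuous_norm_le _ zero_le_one _, ?_, fun s hs => ?_⟩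
  · change ψ (Submodule.Quotient.mk a) = 1
    rw [hψa, hna]; simp
  · change ψ (Submodule.Quotient.mk s) = 0
    rw [(Submodule.Quotient.mk_eq_zero S).2 hs, map_zero]

theorem phi_small {ι : Type*} (φ : StrongDual ℂ (ℓ²(ι, ℂ) →L[ℂ] ℓ²(ι, ℂ))) (hφ : ‖φ‖ ≤ 1)
    (m : ι → ℝ) (C : ℝ) (hm : ∀ i, |m i| ≤ C) (h0 : ∀ i, 0 ≤ m i)
    (h1 : ∀ i, m i ≤ 1) (U : Set ι) (hU : ∀ i ∉ U, m i = 0) (e : Equiv.Perm ι)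
    (he : ∀ i ∈ U, e i ∉ U) (η : ℝ) (hη : 0 < η)
    (hM : 1 - η ^ 2 / 4 < (φ (diagOp m C hm)).re) : ‖φ (permOp e)‖ ≤ η := by
  by_cases hz : φ (permOp e) = 0
  · rw [hz]; simpa using hη.le
  set z := φ (permOp e) with hzdef
  have hz0 : 0 < ‖z‖ := norm_pos_iff.2 hz
  let c : ℂ := ((η / 2 / ‖z‖ : ℝ) : ℂ) * (starRingEnd ℂ) z
  have hc : ‖c‖ = η / 2 := by
    simp only [c, norm_mul, Complex.norm_real, RCLike.norm_conj, Real.norm_eq_abs]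
    rw [abs_of_pos (by positivity)]
    field_simp
  have hcz : (c * z).re = η / 2 * ‖z‖ := by
    have : c * z = ((η / 2 / ‖z‖ : ℝ) : ℂ) * ((‖z‖ ^ 2 : ℝ) : ℂ) := by
      simp only [c]
      rw [mul_assoc, mul_comm _ z, Complex.mul_conj, Complex.normSq_eq_norm_sq]
    rw [this, ← Complex.ofReal_mul, Complex.ofReal_re]
    field_simp
  have h2 := re_le_of_norm φ hφ _ _ (pert_bound m C hm h0 h1 U hU e he c)
  rw [map_add, map_smul, Complex.add_re, smul_eq_mul, ← hzdef, hcz, hc] at h2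
  nlinarith

variable {Y : Type u} [TopologicalSpace Y] [CompactSpace Y] [T2Space Y] [MulAction G Y]
    [ContinuousConstSMul G Y]

theorem exists_small_nhd (x : Y) (F : Finset G) (hF : ∀ g ∈ F, g • x ≠ x) :
    ∃ U : Set Y, IsOpen U ∧ x ∈ U ∧ ∀ g ∈ F, ∀ y ∈ U, g • y ∉ U := by
  classical
  induction F using Finset.induction_on with
  | empty => exact ⟨Set.univ, isOpen_univ, trivial, by simp⟩
  | insert a s ha ih =>
    obtain ⟨U, hU, hxU, h⟩ := ih fun g hg => hF g (Finset.mem_insert_of_mem hg)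
    obtain ⟨A, B, hA, hB, hxA, hxB, hAB⟩ := t2_separation (hF a (Finset.mem_insert_self a s))
    refine ⟨U ∩ (B ∩ (fun y => a • y) ⁻¹' A),
      hU.inter (hB.inter (hA.preimage (continuous_const_smul a))), ⟨hxU, hxB, hxA⟩, ?_⟩
    intro g hg y hy hgy
    rcases Finset.mem_insert.1 hg with rfl | hg
    · exact Set.disjoint_left.1 hAB hy.2.2 hgy.2.1
    · exact h g hg y hy.1 hgy.1

theorem free_phi (hY : IsBoundary G Y) (x : Y) (hfree : ∀ g : G, g • x = x → g = 1)
    (φ : StrongDual ℂ (ℓ²(G, ℂ) →L[ℂ] ℓ²(G, ℂ))) (hφ : ‖φ‖ ≤ 1) (h1 : φ 1 = 1)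
    (F : Finset G) (hF : (1 : G) ∉ F) (η : ℝ) (hη : 0 < η) :
    ∃ k : G, ∀ g ∈ F, ‖φ (lreg (k⁻¹ * g * k))‖ ≤ η := by
  obtain ⟨U, hU, hxU, hUF⟩ := exists_small_nhd x F (fun g hg h => hF (by rwa [hfree g h] at hg))
  obtain ⟨f, f0, f1, f2⟩ := exists_continuous_zero_one_of_isClosed (s := Uᶜ) (t := {x})
      hU.isClosed_compl isClosed_singleton (by simpa using hxU)
  let o : G → Y := fun k => k • x
  obtain ⟨k, hk⟩ := bdry_state hY (stC o φ) (stC_pos o φ hφ h1) (stC_one o φ h1) x f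
    (ε := η ^ 2 / 4) (by positivity)
  have hfx : f x = 1 := f1 rfl
  rw [hfx] at hk
  have hk2 := (abs_lt.1 hk).1
  refine ⟨k, fun g hg => ?_⟩
  rw [lreg_eq]
  refine phi_small φ hφ (fun i => trC k f (o i)) ‖trC k f‖
    (fun i => (trC k f).norm_coe_le_norm _) (fun i => (f2 _).1) (fun i => (f2 _).2)
    {i | k • i • x ∈ U} (fun i hi => f0 hi) (Equiv.mulLeft (k⁻¹ * g * k)) ?_ η hη ?_
  · intro i hi hi2
    refine hUF g hg _ hi ?_
    have : k • (k⁻¹ * g * k * i) • x = g • k • i • x := by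
      simp only [mul_smul, smul_inv_smul]
    rw [← this]
    exact hi2
  · change _ < stC o φ (trC k f)
    linarith

theorem free_imp_simple (hY : IsBoundary G Y) (x : Y) (hfree : ∀ g : G, g • x = x → g = 1) :
    IsCstarSimple G := by
  classical
  intro I hI
  by_contra hcon
  push Not at hcon
  obtain ⟨hbot, htop⟩ := hcon
  haveI : CompleteSpace (redCstar G) := (redCstar_closed (G := G)).completeSpace_coe
  have h1I : (1 : redCstar G) ∉ I := fun h => htop (by
    rw [eq_top_iff]
    intro a _
    simpa using I.mul_mem_left a 1 h)
  have hdist : ∀ a ∈ I, 1 ≤ ‖(1 : redCstar G) - a‖ := by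
    intro a ha
    by_contra! hlt
    have hu := (Units.oneSub (1 - a) hlt)
    have : ((Units.oneSub (1 - a) hlt : (redCstar G)ˣ) : redCstar G) = a := by simp
    apply h1I
    have h3 := I.mul_mem_left (((Units.oneSub (1 - a) hlt)⁻¹ : (redCstar G)ˣ) : redCstar G) a ha
    nth_rewrite 2 [← this] at h3
    rwa [Units.inv_mul] at h3
  let S : Submodule ℂ (ℓ²(G, ℂ) →L[ℂ] ℓ²(G, ℂ)) :=
    { carrier := {T | ∃ a ∈ I, (a : redCstar G).1 = T}
      add_mem' := by
        rintro _ _ ⟨a, ha, rfl⟩ ⟨b, hb, rfl⟩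
        exact ⟨a + b, I.add_mem ha hb, rfl⟩
      zero_mem' := ⟨0, I.zero_mem, rfl⟩
      smul_mem' := by
        rintro c _ ⟨a, ha, rfl⟩
        refine ⟨(c • (1 : redCstar G)) * a, I.mul_mem_left _ _ ha, ?_⟩
        rw [smul_mul_assoc, one_mul]; rfl }
  have hone : ‖(1 : ℓ²(G, ℂ) →L[ℂ] ℓ²(G, ℂ))‖ ≤ 1 := ContinuousLinearMap.norm_id_le
  obtain ⟨φ, hφ, hφ1, hφS⟩ := exists_state_kill S 1 hone (by
    rintro _ ⟨a, ha, rfl⟩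
    exact hdist a ha)
  -- a nonzero element
  obtain ⟨a, haI, ha0⟩ : ∃ a ∈ I, a ≠ 0 := by
    by_contra! h
    apply hbot
    rw [eq_bot_iff]
    intro a ha
    rw [h a ha]
    exact TwoSidedIdeal.zero_mem _
  set c : redCstar G := star a * a with hc
  have hcI : c ∈ I := I.mul_mem_left _ _ haI
  have hcv : c.1 = star a.1 * a.1 := rfl
  let t : ℝ := ‖a.1 (dl 1)‖ ^ 2
  have ht : 0 < t := by
    have : a.1 (dl 1) ≠ 0 := fun h => ha0 (Subtype.ext (redCstar_zero a.1 a.2 h))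
    have := norm_pos_iff.2 this
    positivity
  have hτ : c.1 (dl 1) 1 = (t : ℂ) := by
    rw [← inner_dl, hcv, ContinuousLinearMap.mul_apply, ContinuousLinearMap.star_eq_adjoint,
      ContinuousLinearMap.adjoint_inner_right, inner_self_eq_norm_sq_to_K]
    simp [t]
  obtain ⟨b, hb⟩ := redCstar_approx c.1 c.2 (t / 4) (by positivity)
  set B := b.sum fun g a => a • lreg g with hB
  have hBe : B (dl 1) 1 = b 1 := by
    rw [hB, Finsupp.sum, ContinuousLinearMap.sum_apply, lp.coeFn_sum, Finset.sum_apply]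
    have : ∀ g ∈ b.support, ((b g • lreg g) (dl 1) : ℓ²(G, ℂ)) 1 = if (1 : G) = g then b g else 0 := by
      intro g _
      change b g * (lreg g (dl 1) : ℓ²(G, ℂ)) 1 = _
      rw [lreg_dl, dl_apply, mul_one]
      split_ifs <;> simp
    rw [Finset.sum_congr rfl this, Finset.sum_ite_eq]
    split_ifs with h
    · rfl
    · have h0 : b 1 = 0 := by simpa using h
      rw [h0]
  have e1 : ‖(t : ℂ) - b 1‖ < t / 4 := by
    rw [← hτ, ← hBe]
    have h3 : c.1 (dl 1) 1 - B (dl 1) 1 = ((c.1 - B) (dl 1) : ℓ²(G, ℂ)) 1 := rfl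
    rw [h3]
    refine lt_of_le_of_lt ((lp.norm_apply_le_norm (by norm_num) _ _).trans
      ((c.1 - B).le_opNorm _)) ?_
    rw [dl_norm, mul_one]
    exact hb
  let N : ℝ := ∑ g ∈ b.support.erase 1, ‖b g‖
  have hN : 0 ≤ N := Finset.sum_nonneg fun _ _ => norm_nonneg _
  obtain ⟨k, hk⟩ := free_phi hY x hfree φ hφ hφ1 (b.support.erase 1) (by simp)
    (t / (4 * (N + 1))) (by positivity)
  have e2 : φ (lreg k⁻¹ * c.1 * lreg k) = 0 := by
    apply hφS
    exact ⟨⟨lreg k⁻¹, lreg_mem _⟩ * c * ⟨lreg k, lreg_mem _⟩,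
      I.mul_mem_right _ _ (I.mul_mem_left _ _ hcI), rfl⟩
  have e3 : ‖φ (lreg k⁻¹ * B * lreg k)‖ ≤ t / 4 := by
    have h3 : φ (lreg k⁻¹ * B * lreg k) = - φ (lreg k⁻¹ * (c.1 - B) * lreg k) := by
      rw [mul_sub, sub_mul, map_sub, e2]; simp
    rw [h3, norm_neg]
    refine (φ.le_opNorm _).trans ?_
    have h4 : ‖lreg k⁻¹ * (c.1 - B) * lreg k‖ ≤ 1 * ‖c.1 - B‖ * 1 := by
      refine (norm_mul_le _ _).trans ?_
      gcongr
      · refine (norm_mul_le _ _).trans ?_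
        gcongr
        exact lreg_norm_le _
      · exact lreg_norm_le _
    have h5 := norm_nonneg (lreg k⁻¹ * (c.1 - B) * lreg k)
    have h6 := norm_nonneg φ
    nlinarith
  have e4 : φ (lreg k⁻¹ * B * lreg k) = ∑ g ∈ b.support, b g * φ (lreg (k⁻¹ * g * k)) := by
    rw [hB, Finsupp.sum, Finset.mul_sum, Finset.sum_mul, map_sum]
    refine Finset.sum_congr rfl fun g _ => ?_
    rw [mul_smul_comm, smul_mul_assoc, map_smul, smul_eq_mul]
    congr 2
    simp only [← lregHom_apply, map_mul]
  have e5 : ∑ g ∈ b.support, b g * φ (lreg (k⁻¹ * g * k)) =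
      b 1 + ∑ g ∈ b.support.erase 1, b g * φ (lreg (k⁻¹ * g * k)) := by
    have hb1 : b 1 * φ (lreg (k⁻¹ * 1 * k)) = b 1 := by
      have h0 : lreg (1 : G) = 1 := (lregHom G).map_one
      rw [mul_one, inv_mul_cancel, h0, hφ1, mul_one]
    by_cases h : (1 : G) ∈ b.support
    · rw [← Finset.add_sum_erase _ _ h, hb1]
    · rw [Finset.erase_eq_of_notMem h]
      have : b 1 = 0 := by simpa using h
      rw [this, zero_add]
  have e6 : ‖∑ g ∈ b.support.erase 1, b g * φ (lreg (k⁻¹ * g * k))‖ ≤ t / 4 := by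
    refine (norm_sum_le _ _).trans ?_
    calc _ ≤ ∑ g ∈ b.support.erase 1, ‖b g‖ * (t / (4 * (N + 1))) := by
          refine Finset.sum_le_sum fun g hg => ?_
          rw [norm_mul]
          exact mul_le_mul_of_nonneg_left (hk g hg) (norm_nonneg _)
      _ = N * (t / (4 * (N + 1))) := by rw [← Finset.sum_mul]
      _ ≤ t / 4 := by
          rw [mul_div_assoc', div_le_div_iff₀ (by positivity) (by norm_num)]
          nlinarith
  rw [e4, e5] at e3
  set R := ∑ g ∈ b.support.erase 1, b g * φ (lreg (k⁻¹ * g * k))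
  have e7 : ‖(t : ℂ)‖ ≤ ‖(t : ℂ) - b 1‖ + ‖b 1 + R‖ + ‖R‖ := by
    have : (t : ℂ) = ((t : ℂ) - b 1) + (b 1 + R) - R := by ring
    calc ‖(t : ℂ)‖ = ‖((t : ℂ) - b 1) + (b 1 + R) - R‖ := by rw [← this]
      _ ≤ ‖((t : ℂ) - b 1) + (b 1 + R)‖ + ‖R‖ := norm_sub_le _ _
      _ ≤ _ := by gcongr; exact norm_add_le _ _
  rw [Complex.norm_real, Real.norm_eq_abs, abs_of_pos ht] at e7
  linarith

end simple

/-! ### The Reiter condition -/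

theorem single_lp_norm (k : G) [DecidableEq G] :
    ‖(lp.single 1 k (1 : ℝ) : lp (fun _ : G => ℝ) 1)‖ = 1 := by
  rw [lp.norm_single (by norm_num)]; simp

theorem reiter_zero [DecidableEq G] (H : Subgroup G) (hH : IsAmenable H) (F : Finset H) :
    (0 : F → lp (fun _ : G => ℝ) 1) ∈ closure
      ((Finsupp.linearCombination ℝ (fun (k : H) (h : F) =>
        (lp.single 1 ((h : H) * k : G) (1 : ℝ) - lp.single 1 (k : G) (1 : ℝ) :
          lp (fun _ : G => ℝ) 1))) ''
        {μ : H →₀ ℝ | (∀ k, 0 ≤ μ k) ∧ (μ.sum fun _ a => a) = 1}) := by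
  classical
  set L := (Finsupp.linearCombination ℝ (fun (k : H) (h : F) =>
        (lp.single 1 ((h : H) * k : G) (1 : ℝ) - lp.single 1 (k : G) (1 : ℝ) :
          lp (fun _ : G => ℝ) 1))) with hL
  set P := {μ : H →₀ ℝ | (∀ k, 0 ≤ μ k) ∧ (μ.sum fun _ a => a) = 1} with hP
  by_contra hcon
  have hPc : Convex ℝ P := by
    rintro μ ⟨h1, h2⟩ ν ⟨h3, h4⟩ a b ha hb hab
    refine ⟨fun k => ?_, ?_⟩
    · simp only [Finsupp.coe_add, Finsupp.coe_smul, Pi.add_apply, Pi.smul_apply, smul_eq_mul]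
      have := h1 k; have := h3 k; positivity
    · rw [Finsupp.sum_add_index' (by simp) (by simp), Finsupp.sum_smul_index' (by simp),
        Finsupp.sum_smul_index' (by simp)]
      have e1 : (μ.sum fun _ c => a • c) = a * μ.sum fun _ c => c := by
        rw [Finsupp.mul_sum]; rfl
      have e2 : (ν.sum fun _ c => b • c) = b * ν.sum fun _ c => c := by
        rw [Finsupp.mul_sum]; rfl
      rw [e1, e2, h2, h4]; linarith
  have hC : Convex ℝ (closure (L '' P)) := (hPc.linear_image L).closure
  obtain ⟨f, u, hu, hf⟩ := geometric_hahn_banach_point_closed hC isClosed_closure hcon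
  rw [map_zero] at hu
  have hk : ∀ k : H, u < f (fun h : F => (lp.single 1 ((h : H) * k : G) (1 : ℝ) - lp.single 1 (k : G) (1 : ℝ) :
          lp (fun _ : G => ℝ) 1)) := by
    intro k
    refine hf _ (subset_closure ⟨Finsupp.single k 1, ⟨fun j => ?_, by simp⟩, ?_⟩)
    · rw [Finsupp.single_apply]; split_ifs <;> norm_num
    · rw [hL, Finsupp.linearCombination_single, one_smul]
  let fh : F → StrongDual ℝ (lp (fun _ : G => ℝ) 1) := fun h =>
    f.comp (ContinuousLinearMap.single ℝ (fun _ : F => lp (fun _ : G => ℝ) 1) h)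
  have hsum : ∀ v : F → lp (fun _ : G => ℝ) 1, f v = ∑ h, fh h (v h) := by
    intro v
    have : v = ∑ h, ContinuousLinearMap.single ℝ (fun _ : F => lp (fun _ : G => ℝ) 1) h (v h) := by
      ext1 j
      simp [Finset.sum_apply, Pi.single_apply]
    conv_lhs => rw [this]
    rw [map_sum]; rfl
  obtain ⟨m, m1, mpos, minv⟩ := hH
  let φ : F → lp (fun _ : H => ℝ) ∞ := fun h => ⟨fun k => fh h (lp.single 1 (k : G) (1 : ℝ)), by
    refine memℓp_infty ⟨‖fh h‖, ?_⟩
    rintro _ ⟨k, rfl⟩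
    refine ((fh h).le_opNorm _).trans ?_
    rw [single_lp_norm, mul_one]⟩
  let Φ : lp (fun _ : H => ℝ) ∞ := ∑ h : F, (translInfty (h : H)⁻¹ (φ h) - φ h) - u • 1
  have hΦ : ∀ k, 0 ≤ Φ k := by
    intro k
    have h1 := (hk k).le
    rw [hsum] at h1
    have h2 : Φ k = ∑ h : F, (fh h (lp.single 1 ((h : H) * k : G) (1 : ℝ) - lp.single 1 (k : G) (1 : ℝ))) - u := by
      have h3 : (∑ h : F, (translInfty (h : H)⁻¹ (φ h) - φ h)) k =
          ∑ h : F, (translInfty (h : H)⁻¹ (φ h) - φ h) k := by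
        rw [lp.coeFn_sum, Finset.sum_apply]
      change (∑ h : F, (translInfty (h : H)⁻¹ (φ h) - φ h)) k - u * 1 = _
      rw [h3, mul_one]
      congr 1
      refine Finset.sum_congr rfl fun h _ => ?_
      rw [map_sub]
      change fh h (lp.single 1 (((h : H)⁻¹⁻¹ * k : H) : G) (1 : ℝ)) - fh h (lp.single 1 (k : G) (1 : ℝ)) = _
      rw [inv_inv]; rfl
    rw [h2]; linarith
  have h4 := mpos Φ hΦ
  have h5 : m Φ = -u := by
    simp only [Φ]
    rw [map_sub, map_sum, map_smul, m1]
    simp [minv]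
  linarith

theorem reiter (H : Subgroup G) (hH : IsAmenable H) (F : Finset H) (ε : ℝ) (hε : 0 < ε) :
    ∃ μ : G → ℝ, (∀ g, 0 ≤ μ g) ∧ HasSum μ 1 ∧ (∀ g, g ∉ H → μ g = 0) ∧
      ∀ h ∈ F, ∃ s < ε, HasSum (fun j => |μ ((h : G)⁻¹ * j) - μ j|) s := by
  classical
  have h0 := reiter_zero H hH F
  rw [Metric.mem_closure_iff] at h0
  obtain ⟨_, ⟨μ, ⟨hμ0, hμ1⟩, rfl⟩, hd⟩ := h0 ε hε
  rw [dist_zero_left] at hd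
  let ν : G →₀ ℝ := μ.mapDomain Subtype.val
  have hνH : ∀ k : H, ν k = μ k := fun k => Finsupp.mapDomain_apply Subtype.val_injective _ _
  have hνN : ∀ g, g ∉ H → ν g = 0 := fun g hg =>
    Finsupp.mapDomain_notin_range _ _ (by simpa using hg)
  refine ⟨ν, fun g => ?_, ?_, hνN, fun h hh => ?_⟩
  · by_cases hg : g ∈ H
    · have := hνH ⟨g, hg⟩
      simp only at this
      rw [this]; exact hμ0 _
    · rw [hνN g hg]
  · have e : (ν.sum fun _ a => a) = 1 := by
      rw [← hμ1]
      exact Finsupp.sum_mapDomain_index (by simp) (by simp)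
    rw [← e]
    exact hasSum_sum_of_ne_finset_zero fun g hg => by simpa using hg
  · set v := (Finsupp.linearCombination ℝ (fun (k : H) (h : F) =>
        (lp.single 1 ((h : H) * k : G) (1 : ℝ) - lp.single 1 (k : G) (1 : ℝ) :
          lp (fun _ : G => ℝ) 1))) μ with hv
    have hvn : ‖v ⟨h, hh⟩‖ < ε := (norm_le_pi_norm v ⟨h, hh⟩).trans_lt hd
    have hve : ∀ j : G, v ⟨h, hh⟩ j = ν ((h : G)⁻¹ * j) - ν j := by
      intro j
      have e1 : ∀ j : G, ν j = μ.sum fun k a => if j = (k : G) then a else 0 := by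
        intro j
        simp only [ν, Finsupp.mapDomain, Finsupp.sum, Finsupp.finset_sum_apply, Finsupp.single_apply]
        exact Finset.sum_congr rfl fun k _ => by simp only [eq_comm]
      rw [e1, e1, ← Finsupp.sum_sub, hv, Finsupp.linearCombination_apply, Finsupp.sum,
        Finset.sum_apply, lp.coeFn_sum, Finset.sum_apply, Finsupp.sum]
      refine Finset.sum_congr rfl fun k _ => ?_
      change μ k * ((lp.single 1 ((h : H) * k : G) (1 : ℝ) : lp (fun _ : G => ℝ) 1) j -
        (lp.single 1 (k : G) (1 : ℝ) : lp (fun _ : G => ℝ) 1) j) = _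
      rw [lp.single_apply, lp.single_apply, Pi.single_apply, Pi.single_apply, mul_sub]
      simp [inv_mul_eq_iff_eq_mul]
    refine ⟨_, hvn, ?_⟩
    have h1 := lp.hasSum_norm (p := 1) (by norm_num) (v ⟨h, hh⟩)
    simp only [ENNReal.toReal_one, Real.rpow_one] at h1
    convert h1 using 2 with j
    rw [hve, Real.norm_eq_abs]

theorem almost_inv (H : Subgroup G) (hH : IsAmenable H) (F : Finset H) (ε : ℝ) (hε : 0 < ε) :
    ∃ ξ : ℓ²(G, ℂ), ‖ξ‖ = 1 ∧ (∀ g, g ∉ H → ξ g = 0) ∧ ∀ h ∈ F, ‖lreg (h : G) ξ - ξ‖ ≤ ε := by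
  obtain ⟨μ, h0, h1, hN, hF⟩ := reiter H hH F (ε ^ 2) (by positivity)
  have hsq : ∀ g, ‖((√(μ g) : ℝ) : ℂ)‖ ^ 2 = μ g := fun g => by
    rw [Complex.norm_real, Real.norm_eq_abs, sq_abs, Real.sq_sqrt (h0 g)]
  let ξ : ℓ²(G, ℂ) := ⟨fun g => ((√(μ g) : ℝ) : ℂ), l2_mem _ (by
    simp only [hsq]; exact h1.summable)⟩
  have hξ : ∀ g, ξ g = ((√(μ g) : ℝ) : ℂ) := fun g => rfl
  refine ⟨ξ, ?_, fun g hg => ?_, fun h hh => ?_⟩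
  · have h2 := l2_hasSum ξ
    simp only [hξ, hsq] at h2
    have h3 := h2.unique h1
    nlinarith [norm_nonneg ξ]
  · rw [hξ, hN g hg]; simp
  · obtain ⟨s, hs, hS⟩ := hF h hh
    have h2 := l2_hasSum (lreg (h : G) ξ - ξ)
    have h3 : ‖lreg (h : G) ξ - ξ‖ ^ 2 ≤ s := by
      refine hasSum_le (fun j => ?_) h2 hS
      have e : (lreg (h : G) ξ - ξ) j = ((√(μ ((h : G)⁻¹ * j)) - √(μ j) : ℝ) : ℂ) := by
        change lreg (h : G) ξ j - ξ j = _
        rw [lreg_apply, hξ, hξ]; push_cast; rfl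
      rw [e, Complex.norm_real, Real.norm_eq_abs]
      have ha := Real.sqrt_nonneg (μ ((h : G)⁻¹ * j))
      have hb := Real.sqrt_nonneg (μ j)
      have e2 : μ ((h : G)⁻¹ * j) - μ j = (√(μ ((h : G)⁻¹ * j)) - √(μ j)) * (√(μ ((h : G)⁻¹ * j)) + √(μ j)) := by
        nlinarith [Real.sq_sqrt (h0 ((h : G)⁻¹ * j)), Real.sq_sqrt (h0 j)]
      rw [e2, abs_mul, sq]
      refine mul_le_mul_of_nonneg_left ?_ (abs_nonneg _)
      rw [abs_of_nonneg (add_nonneg ha hb), abs_le]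
      constructor <;> linarith
    exact (pow_le_pow_iff_left₀ (norm_nonneg _) hε.le two_ne_zero).1 (h3.trans hs.le)

/-! ### The quasi-regular representation and weak containment -/

section quasi
variable {ι : Type*} [MulAction G ι]

variable (G ι) in
/-- the permutation representation -/
def sigHom : G →* (ℓ²(ι, ℂ) →L[ℂ] ℓ²(ι, ℂ)) where
  toFun g := permOp (MulAction.toPerm g)
  map_one' := by
    rw [← permOp_one]; congr 1; ext i; simp
  map_mul' g h := by
    rw [← permOp_mul]; congr 1; ext i; simp [mul_smul]

theorem sig_apply (g : G) (ξ : ℓ²(ι, ℂ)) (i : ι) : sigHom G ι g ξ i = ξ (g⁻¹ • i) := rfl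

theorem sig_star (g : G) : star (sigHom G ι g) = sigHom G ι g⁻¹ := by
  change star (permOp _) = permOp _
  rw [permOp_star]; congr 1; ext i; rfl

theorem sig_dl (g : G) (i : ι) : sigHom G ι g (dl i) = dl (g • i) := by
  classical
  ext j
  rw [sig_apply, dl_apply, dl_apply]
  simp [inv_smul_eq_iff]

theorem inner_dl_dl [DecidableEq ι] (i j : ι) : inner ℂ (dl i) (dl j) = if i = j then (1 : ℂ) else 0 := by
  rw [inner_dl, dl_apply]

theorem gram_norm {J E E' : Type*} [NormedAddCommGroup E] [InnerProductSpace ℂ E]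
    [NormedAddCommGroup E'] [InnerProductSpace ℂ E'] (s : Finset J) (c : J → ℂ) (u : J → E)
    (v : J → E') (ε : ℝ)
    (h : ∀ i ∈ s, ∀ j ∈ s, ‖inner ℂ (u i) (u j) - inner ℂ (v i) (v j)‖ ≤ ε) :
    |‖∑ j ∈ s, c j • u j‖ ^ 2 - ‖∑ j ∈ s, c j • v j‖ ^ 2| ≤ ε * (∑ j ∈ s, ‖c j‖) ^ 2 := by
  have e : ∀ {E : Type _} [NormedAddCommGroup E] [InnerProductSpace ℂ E] (u : J → E),
      ((‖∑ j ∈ s, c j • u j‖ ^ 2 : ℝ) : ℂ) =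
        ∑ i ∈ s, ∑ j ∈ s, (starRingEnd ℂ (c i) * c j) * inner ℂ (u i) (u j) := by
    intro E _ _ u
    have := inner_self_eq_norm_sq_to_K (𝕜 := ℂ) (∑ j ∈ s, c j • u j)
    push_cast
    refine this.symm.trans ?_
    rw [sum_inner]
    refine Finset.sum_congr rfl fun i _ => ?_
    rw [inner_sum]
    refine Finset.sum_congr rfl fun j _ => ?_
    rw [inner_smul_left, inner_smul_right]; ring
  have e' : ((‖∑ j ∈ s, c j • v j‖ ^ 2 : ℝ) : ℂ) =
        ∑ i ∈ s, ∑ j ∈ s, (starRingEnd ℂ (c i) * c j) * inner ℂ (v i) (v j) := by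
    have := inner_self_eq_norm_sq_to_K (𝕜 := ℂ) (∑ j ∈ s, c j • v j)
    push_cast
    refine this.symm.trans ?_
    rw [sum_inner]
    refine Finset.sum_congr rfl fun i _ => ?_
    rw [inner_sum]
    refine Finset.sum_congr rfl fun j _ => ?_
    rw [inner_smul_left, inner_smul_right]; ring
  have h1 : |‖∑ j ∈ s, c j • u j‖ ^ 2 - ‖∑ j ∈ s, c j • v j‖ ^ 2| =
      ‖((‖∑ j ∈ s, c j • u j‖ ^ 2 : ℝ) : ℂ) - ((‖∑ j ∈ s, c j • v j‖ ^ 2 : ℝ) : ℂ)‖ := by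
    rw [← Complex.ofReal_sub, Complex.norm_real, Real.norm_eq_abs]
  rw [h1, e, e', ← Finset.sum_sub_distrib]
  simp only [← Finset.sum_sub_distrib, ← mul_sub]
  have e3 : ε * (∑ j ∈ s, ‖c j‖) ^ 2 = ∑ i ∈ s, ∑ j ∈ s, ‖c i‖ * ‖c j‖ * ε := by
    rw [sq, Finset.sum_mul_sum, Finset.mul_sum]
    refine Finset.sum_congr rfl fun i _ => ?_
    rw [Finset.mul_sum]
    refine Finset.sum_congr rfl fun j _ => by ring
  rw [e3]
  refine (norm_sum_le _ _).trans (Finset.sum_le_sum fun i hi => ?_)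
  refine (norm_sum_le _ _).trans (Finset.sum_le_sum fun j hj => ?_)
  rw [norm_mul, norm_mul, RCLike.norm_conj]
  exact mul_le_mul_of_nonneg_left (h i hi j hj) (by positivity)

theorem gram_exists (x : ι) (hH : IsAmenable (MulAction.stabilizer G x)) (K : Finset G) (ε : ℝ)
    (hε : 0 < ε) : ∃ ξ : ℓ²(G, ℂ), ∀ k ∈ K, ∀ l ∈ K,
      ‖inner ℂ (lreg k ξ) (lreg l ξ) - inner ℂ (dl (k • x)) (dl (l • x))‖ ≤ ε := by
  classical
  let F : Finset (MulAction.stabilizer G x) :=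
    ((K ×ˢ K).image fun p => p.1⁻¹ * p.2).subtype (· ∈ MulAction.stabilizer G x)
  obtain ⟨ξ, h1, hN, hF⟩ := almost_inv _ hH F ε hε
  refine ⟨ξ, fun k hk l hl => ?_⟩
  have e1 : inner ℂ (lreg k ξ) (lreg l ξ) = inner ℂ ξ (lreg (k⁻¹ * l) ξ) := by
    have : lreg (k⁻¹ * l) = star (lreg k) * lreg l := by
      rw [lreg_star]; exact (lregHom G).map_mul _ _
    rw [this, ContinuousLinearMap.star_eq_adjoint]
    exact (ContinuousLinearMap.adjoint_inner_right _ _ _).symm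
  rw [e1, inner_dl_dl]
  by_cases h : k • x = l • x
  · have hm : k⁻¹ * l ∈ MulAction.stabilizer G x := by
      rw [MulAction.mem_stabilizer_iff, mul_smul, ← h, inv_smul_smul]
    have h2 := hF ⟨k⁻¹ * l, hm⟩ (by
      simp only [F, Finset.mem_subtype, Finset.mem_image, Finset.mem_product]
      exact ⟨(k, l), ⟨hk, hl⟩, rfl⟩)
    rw [if_pos h]
    have e2 : (1 : ℂ) = inner ℂ ξ ξ := by
      rw [inner_self_eq_norm_sq_to_K, h1]; simp
    rw [e2, ← inner_sub_right]
    refine (norm_inner_le_norm _ _).trans ?_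
    rw [h1, one_mul]; exact h2
  · rw [if_neg h, sub_zero]
    have : inner ℂ ξ (lreg (k⁻¹ * l) ξ) = (0 : ℂ) := by
      rw [lp.inner_eq_tsum]
      convert tsum_zero with g
      rw [lreg_apply]
      by_cases hg : g ∈ MulAction.stabilizer G x
      · have : (k⁻¹ * l)⁻¹ * g ∉ MulAction.stabilizer G x := by
          intro hg2
          apply h
          have h3 := mul_mem hg (inv_mem hg2)
          rw [mul_inv_rev, inv_inv, mul_inv_cancel_left, MulAction.mem_stabilizer_iff, mul_smul,
            inv_smul_eq_iff] at h3
          exact h3.symm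
        rw [hN _ this, inner_zero_right]
      · rw [hN _ hg, inner_zero_left]
    rw [this, norm_zero]; exact hε.le

theorem weak_cont_fin (x : ι) (hH : IsAmenable (MulAction.stabilizer G x)) (a : G →₀ ℂ)
    (B : Finset ι) (k : ι → G) (b : ι → ℂ) :
    ‖(a.sum fun g z => z • sigHom G ι g) (∑ i ∈ B, b i • dl (k i • x))‖ ≤
      ‖a.sum fun g z => z • lreg g‖ * ‖∑ i ∈ B, b i • (dl (k i • x) : ℓ²(ι, ℂ))‖ := by
  classical
  set A := a.sum fun g z => z • lreg g with hA
  set S := a.sum fun g z => z • sigHom G ι g with hS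
  set v : ℓ²(ι, ℂ) := ∑ i ∈ B, b i • dl (k i • x) with hv
  let s := a.support ×ˢ B
  have eS : S v = ∑ p ∈ s, (a p.1 * b p.2) • dl ((p.1 * k p.2) • x) := by
    rw [hS, Finsupp.sum, ContinuousLinearMap.sum_apply, Finset.sum_product]
    refine Finset.sum_congr rfl fun g _ => ?_
    rw [hv, map_sum]
    refine Finset.sum_congr rfl fun i _ => ?_
    rw [ContinuousLinearMap.smul_apply, map_smul, sig_dl, smul_smul, mul_smul g (k i) x]
  have eA : ∀ ξ, A (∑ i ∈ B, b i • lreg (k i) ξ) =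
      ∑ p ∈ s, (a p.1 * b p.2) • lreg (p.1 * k p.2) ξ := by
    intro ξ
    rw [hA, Finsupp.sum, ContinuousLinearMap.sum_apply, Finset.sum_product]
    refine Finset.sum_congr rfl fun g _ => ?_
    rw [map_sum]
    refine Finset.sum_congr rfl fun i _ => ?_
    have : lreg (g * k i) = lreg g * lreg (k i) := (lregHom G).map_mul _ _
    rw [ContinuousLinearMap.smul_apply, map_smul, smul_smul, this]; rfl
  set C1 := (∑ p ∈ s, ‖a p.1 * b p.2‖) ^ 2
  set C2 := (∑ i ∈ B, ‖b i‖) ^ 2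
  have key : ∀ ε > 0, ‖S v‖ ^ 2 ≤ (‖A‖ * ‖v‖) ^ 2 + ε * (C1 + ‖A‖ ^ 2 * C2) := by
    intro ε hε
    obtain ⟨ξ, hξ⟩ := gram_exists x hH (s.image (fun p => p.1 * k p.2) ∪ B.image k) ε hε
    have g1 := gram_norm s (fun p => a p.1 * b p.2) (fun p => lreg (p.1 * k p.2) ξ)
      (fun p => (dl ((p.1 * k p.2) • x) : ℓ²(ι, ℂ))) ε (fun p hp q hq => hξ _
        (Finset.mem_union_left _ (Finset.mem_image_of_mem _ hp)) _
        (Finset.mem_union_left _ (Finset.mem_image_of_mem _ hq)))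
    have g2 := gram_norm B b (fun i => lreg (k i) ξ)
      (fun i => (dl (k i • x) : ℓ²(ι, ℂ))) ε (fun p hp q hq => hξ _
        (Finset.mem_union_right _ (Finset.mem_image_of_mem _ hp)) _
        (Finset.mem_union_right _ (Finset.mem_image_of_mem _ hq)))
    rw [← eA, ← eS] at g1
    have g3 := A.le_opNorm (∑ i ∈ B, b i • lreg (k i) ξ)
    have g4 := pow_le_pow_left₀ (norm_nonneg _) g3 2
    have g5 := (abs_le.1 g1).1
    have g6 := (abs_le.1 g2).2
    rw [mul_pow] at g4 ⊢
    have g7 := mul_le_mul_of_nonneg_left g6 (sq_nonneg ‖A‖)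
    change _ ≤ _ * (ε * C2) at g7
    change -(ε * C1) ≤ _ at g5
    nlinarith
  have h2 : ‖S v‖ ^ 2 ≤ (‖A‖ * ‖v‖) ^ 2 := by
    refine le_of_forall_pos_le_add fun δ hδ => ?_
    have hc : 0 ≤ C1 + ‖A‖ ^ 2 * C2 := by positivity
    refine (key (δ / (C1 + ‖A‖ ^ 2 * C2 + 1)) (by positivity)).trans ?_
    gcongr
    rw [div_mul_eq_mul_div, div_le_iff₀ (by positivity)]
    nlinarith
  exact (pow_le_pow_iff_left₀ (norm_nonneg _) (by positivity) two_ne_zero).1 h2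

theorem weak_cont [MulAction.IsPretransitive G ι] (x : ι)
    (hH : IsAmenable (MulAction.stabilizer G x)) (a : G →₀ ℂ) :
    ‖a.sum fun g z => z • sigHom G ι g‖ ≤ ‖a.sum fun g z => z • lreg g‖ := by
  classical
  refine ContinuousLinearMap.opNorm_le_bound _ (norm_nonneg _) fun η => ?_
  choose k hk using fun i => MulAction.exists_smul_eq G x i
  have h1 := lp.hasSum_single (p := 2) (by norm_num) η
  have e : ∀ i, (lp.single 2 i (η i) : ℓ²(ι, ℂ)) = η i • dl (k i • x) := by
    intro i
    rw [hk]
    ext j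
    rw [lp.coeFn_smul, Pi.smul_apply, dl_apply, lp.single_apply, Pi.single_apply]
    split_ifs with hj
    · subst hj; simp
    · simp
  simp only [e] at h1
  refine le_of_tendsto_of_tendsto' ((h1.mapL (a.sum fun g z => z • sigHom G ι g)).norm)
    ((Filter.Tendsto.norm h1).const_mul _) fun B => ?_
  rw [← map_sum]
  exact weak_cont_fin x hH a B k η

end quasi

/-! ### C*-simplicity gives freeness -/

section simp_free
variable {ι : Type*} [MulAction G ι]

variable (G ι) in
/-- the joint representation -/
def wHom : G →* (ℓ²(G, ℂ) →L[ℂ] ℓ²(G, ℂ)) × (ℓ²(ι, ℂ) →L[ℂ] ℓ²(ι, ℂ)) :=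
  (lregHom G).prod (sigHom G ι)

variable (G ι) in
/-- the joint C*-algebra -/
def jointD : StarSubalgebra ℂ ((ℓ²(G, ℂ) →L[ℂ] ℓ²(G, ℂ)) × (ℓ²(ι, ℂ) →L[ℂ] ℓ²(ι, ℂ))) :=
  (StarAlgebra.adjoin ℂ (Set.range (wHom G ι))).topologicalClosure

theorem jointD_closed : IsClosed (jointD G ι : Set ((ℓ²(G, ℂ) →L[ℂ] ℓ²(G, ℂ)) × (ℓ²(ι, ℂ) →L[ℂ] ℓ²(ι, ℂ)))) :=
  StarSubalgebra.isClosed_topologicalClosure _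

theorem jointD_mem (g : G) : (lreg g, sigHom G ι g) ∈ jointD G ι :=
  StarSubalgebra.le_topologicalClosure _ (StarAlgebra.subset_adjoin _ _ ⟨g, rfl⟩)

theorem jointD_sub (d) (hd : d ∈ jointD G ι) :
    d ∈ closure (Submodule.span ℂ (Set.range (wHom G ι)) : Set ((ℓ²(G, ℂ) →L[ℂ] ℓ²(G, ℂ)) × (ℓ²(ι, ℂ) →L[ℂ] ℓ²(ι, ℂ)))) := by
  refine closure_mono (fun y hy => ?_) hd
  exact star_adjoin_span (wHom G ι) (fun g => Prod.ext (lreg_star g) (sig_star g)) y hy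

theorem jointD_fst (d) (hd : d ∈ jointD G ι) : d.1 ∈ redCstar G := by
  let S : Submodule ℂ ((ℓ²(G, ℂ) →L[ℂ] ℓ²(G, ℂ)) × (ℓ²(ι, ℂ) →L[ℂ] ℓ²(ι, ℂ))) :=
    (Subalgebra.toSubmodule (redCstar G).toSubalgebra).comap (LinearMap.fst ℂ _ _)
  have hS : IsClosed (S : Set ((ℓ²(G, ℂ) →L[ℂ] ℓ²(G, ℂ)) × (ℓ²(ι, ℂ) →L[ℂ] ℓ²(ι, ℂ)))) :=
    (redCstar_closed (G := G)).preimage continuous_fst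
  have h1 : Submodule.span ℂ (Set.range (wHom G ι)) ≤ S := by
    rw [Submodule.span_le]
    rintro _ ⟨k, rfl⟩
    exact lreg_mem k
  exact closure_minimal h1 hS (jointD_sub d hd)

theorem jointD_norm [MulAction.IsPretransitive G ι] (x : ι)
    (hH : IsAmenable (MulAction.stabilizer G x)) (d) (hd : d ∈ jointD G ι) : ‖d.2‖ ≤ ‖d.1‖ := by
  have hS : IsClosed {d : (ℓ²(G, ℂ) →L[ℂ] ℓ²(G, ℂ)) × (ℓ²(ι, ℂ) →L[ℂ] ℓ²(ι, ℂ)) | ‖d.2‖ ≤ ‖d.1‖} :=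
    isClosed_le (by fun_prop) (by fun_prop)
  refine closure_minimal (fun y hy => ?_) hS (jointD_sub d hd)
  obtain ⟨b, rfl⟩ := span_finsupp _ _ hy
  have h := weak_cont x hH b
  have e1 : (b.sum fun g a => a • wHom G ι g).1 = b.sum fun g z => z • lreg g := by
    rw [Finsupp.sum, Prod.fst_sum]; rfl
  have e2 : (b.sum fun g a => a • wHom G ι g).2 = b.sum fun g z => z • sigHom G ι g := by
    rw [Finsupp.sum, Prod.snd_sum]; rfl
  change ‖_‖ ≤ ‖_‖
  rw [e1, e2]; exact h

theorem jointD_left (T : ℓ²(G, ℂ) →L[ℂ] ℓ²(G, ℂ))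
    (hT : (T, (0 : ℓ²(ι, ℂ) →L[ℂ] ℓ²(ι, ℂ))) ∈ jointD G ι) (X) (hX : X ∈ redCstar G) :
    (X * T, (0 : ℓ²(ι, ℂ) →L[ℂ] ℓ²(ι, ℂ))) ∈ jointD G ι := by
  let S : Submodule ℂ (ℓ²(G, ℂ) →L[ℂ] ℓ²(G, ℂ)) :=
    { carrier := {X | (X * T, (0 : ℓ²(ι, ℂ) →L[ℂ] ℓ²(ι, ℂ))) ∈ jointD G ι}
      add_mem' := fun {a b} ha hb => by
        have ha1 : (a * T, (0 : ℓ²(ι, ℂ) →L[ℂ] ℓ²(ι, ℂ))) ∈ jointD G ι := ha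
        have hb1 : (b * T, (0 : ℓ²(ι, ℂ) →L[ℂ] ℓ²(ι, ℂ))) ∈ jointD G ι := hb
        have := add_mem ha1 hb1
        rw [Prod.mk_add_mk, add_zero, ← add_mul] at this
        exact this
      zero_mem' := by
        change ((0 : ℓ²(G, ℂ) →L[ℂ] ℓ²(G, ℂ)) * T, (0 : ℓ²(ι, ℂ) →L[ℂ] ℓ²(ι, ℂ))) ∈ jointD G ι
        rw [zero_mul]; exact zero_mem _
      smul_mem' := fun c a ha => by
        have ha1 : (a * T, (0 : ℓ²(ι, ℂ) →L[ℂ] ℓ²(ι, ℂ))) ∈ jointD G ι := ha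
        have := (jointD G ι).smul_mem ha1 c
        rw [Prod.smul_mk, smul_zero, ← smul_mul_assoc] at this
        exact this }
  have hS : IsClosed (S : Set (ℓ²(G, ℂ) →L[ℂ] ℓ²(G, ℂ))) :=
    (jointD_closed (G := G) (ι := ι)).preimage (by fun_prop :
      Continuous fun X : ℓ²(G, ℂ) →L[ℂ] ℓ²(G, ℂ) => (X * T, (0 : ℓ²(ι, ℂ) →L[ℂ] ℓ²(ι, ℂ))))
  have h1 : Submodule.span ℂ (Set.range (lreg (G := G))) ≤ S := by
    rw [Submodule.span_le]
    rintro _ ⟨k, rfl⟩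
    have := mul_mem (jointD_mem (ι := ι) k) hT
    rw [Prod.mk_mul_mk, mul_zero] at this
    exact this
  exact closure_minimal h1 hS (redCstar_sub X hX)

theorem jointD_right (T : ℓ²(G, ℂ) →L[ℂ] ℓ²(G, ℂ))
    (hT : (T, (0 : ℓ²(ι, ℂ) →L[ℂ] ℓ²(ι, ℂ))) ∈ jointD G ι) (X) (hX : X ∈ redCstar G) :
    (T * X, (0 : ℓ²(ι, ℂ) →L[ℂ] ℓ²(ι, ℂ))) ∈ jointD G ι := by
  have h1 := star_mem hT
  have e1 : star (T, (0 : ℓ²(ι, ℂ) →L[ℂ] ℓ²(ι, ℂ))) = (star T, (0 : ℓ²(ι, ℂ) →L[ℂ] ℓ²(ι, ℂ))) := Prod.ext rfl (star_zero _)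
  rw [e1] at h1
  have h2 := star_mem (jointD_left _ h1 _ (star_mem hX))
  have e2 : star (star X * star T, (0 : ℓ²(ι, ℂ) →L[ℂ] ℓ²(ι, ℂ))) = (T * X, (0 : ℓ²(ι, ℂ) →L[ℂ] ℓ²(ι, ℂ))) :=
    Prod.ext (by rw [Prod.fst_star, star_mul, star_star, star_star]) (star_zero _)
  rw [e2] at h2
  exact h2

variable (G ι) in
/-- the ideal -/
def kerIdeal : TwoSidedIdeal (redCstar G) :=
  TwoSidedIdeal.mk' {T | ((T : ℓ²(G, ℂ) →L[ℂ] ℓ²(G, ℂ)), (0 : ℓ²(ι, ℂ) →L[ℂ] ℓ²(ι, ℂ))) ∈ jointD G ι}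
    (zero_mem (jointD G ι))
    (fun {a b} ha hb => by
      have ha1 : ((a : ℓ²(G, ℂ) →L[ℂ] ℓ²(G, ℂ)), (0 : ℓ²(ι, ℂ) →L[ℂ] ℓ²(ι, ℂ))) ∈ jointD G ι := ha
      have hb1 : ((b : ℓ²(G, ℂ) →L[ℂ] ℓ²(G, ℂ)), (0 : ℓ²(ι, ℂ) →L[ℂ] ℓ²(ι, ℂ))) ∈ jointD G ι := hb
      have := add_mem ha1 hb1
      rw [Prod.mk_add_mk, add_zero] at this
      exact this)
    (fun {a} ha => by
      have ha1 : ((a : ℓ²(G, ℂ) →L[ℂ] ℓ²(G, ℂ)), (0 : ℓ²(ι, ℂ) →L[ℂ] ℓ²(ι, ℂ))) ∈ jointD G ι := ha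
      have := neg_mem ha1
      rw [Prod.neg_mk, neg_zero] at this
      exact this)
    (fun {a b} hb => jointD_left _ hb _ a.2)
    (fun {a b} ha => jointD_right _ ha _ b.2)

theorem mem_kerIdeal (T : redCstar G) : T ∈ kerIdeal G ι ↔
    ((T : ℓ²(G, ℂ) →L[ℂ] ℓ²(G, ℂ)), (0 : ℓ²(ι, ℂ) →L[ℂ] ℓ²(ι, ℂ))) ∈ jointD G ι := by
  unfold kerIdeal
  rw [TwoSidedIdeal.mem_mk']
  rfl

theorem jointD_inj (hs : IsCstarSimple G) [MulAction.IsPretransitive G ι] (x : ι)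
    (hH : IsAmenable (MulAction.stabilizer G x)) (d) (hd : d ∈ jointD G ι) (h2 : d.2 = 0) :
    d = 0 := by
  have hcl : IsClosed (kerIdeal G ι : Set (redCstar G)) := by
    have e : (kerIdeal G ι : Set (redCstar G)) =
        (fun T : redCstar G => ((T : ℓ²(G, ℂ) →L[ℂ] ℓ²(G, ℂ)), (0 : ℓ²(ι, ℂ) →L[ℂ] ℓ²(ι, ℂ)))) ⁻¹'
          (jointD G ι) := by
      ext T
      exact mem_kerIdeal T
    rw [e]
    exact jointD_closed.preimage (by fun_prop)
  rcases hs _ hcl with h | h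
  · have h1 : (⟨d.1, jointD_fst d hd⟩ : redCstar G) ∈ kerIdeal G ι := by
      rw [mem_kerIdeal]
      have : (d.1, (0 : ℓ²(ι, ℂ) →L[ℂ] ℓ²(ι, ℂ))) = d := Prod.ext rfl h2.symm
      change (d.1, (0 : ℓ²(ι, ℂ) →L[ℂ] ℓ²(ι, ℂ))) ∈ _
      rw [this]; exact hd
    rw [h, TwoSidedIdeal.mem_bot] at h1
    exact Prod.ext (congrArg Subtype.val h1) h2
  · exfalso
    have h1 : (1 : redCstar G) ∈ kerIdeal G ι := by rw [h]; trivial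
    rw [mem_kerIdeal] at h1
    have h3 := jointD_norm x hH _ (sub_mem (one_mem (jointD G ι)) h1)
    have e1 : ((1 : (ℓ²(G, ℂ) →L[ℂ] ℓ²(G, ℂ)) × (ℓ²(ι, ℂ) →L[ℂ] ℓ²(ι, ℂ))) -
      (((1 : redCstar G) : ℓ²(G, ℂ) →L[ℂ] ℓ²(G, ℂ)), 0)).1 = 0 := sub_self _
    have e2 : ((1 : (ℓ²(G, ℂ) →L[ℂ] ℓ²(G, ℂ)) × (ℓ²(ι, ℂ) →L[ℂ] ℓ²(ι, ℂ))) -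
      (((1 : redCstar G) : ℓ²(G, ℂ) →L[ℂ] ℓ²(G, ℂ)), 0)).2 = 1 := sub_zero _
    rw [e1, e2, norm_zero] at h3
    have h4 := (1 : ℓ²(ι, ℂ) →L[ℂ] ℓ²(ι, ℂ)).le_opNorm (dl x)
    have h5 : ‖(1 : ℓ²(ι, ℂ) →L[ℂ] ℓ²(ι, ℂ)) (dl x)‖ = 1 := dl_norm x
    rw [h5, dl_norm] at h4
    linarith

theorem jointD_norm' (hs : IsCstarSimple G) [MulAction.IsPretransitive G ι] (x : ι)
    (hH : IsAmenable (MulAction.stabilizer G x)) (d) (hd : d ∈ jointD G ι) : ‖d.1‖ ≤ ‖d.2‖ := by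
  have : IsClosed (jointD G ι : Set ((ℓ²(G, ℂ) →L[ℂ] ℓ²(G, ℂ)) × (ℓ²(ι, ℂ) →L[ℂ] ℓ²(ι, ℂ)))) :=
    jointD_closed
  letI : CStarAlgebra (jointD G ι) := StarSubalgebra.cstarAlgebra (jointD G ι)
  let φ : (jointD G ι) →⋆ₐ[ℂ] (ℓ²(ι, ℂ) →L[ℂ] ℓ²(ι, ℂ)) :=
    (StarAlgHom.snd ℂ _ _).comp (jointD G ι).subtype
  have hφ : Function.Injective φ := by
    rw [injective_iff_map_eq_zero]
    intro a ha
    exact Subtype.ext (jointD_inj hs x hH a.1 a.2 ha)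
  have h1 := NonUnitalStarAlgHom.norm_map φ hφ ⟨d, hd⟩
  have h2 : ‖d.2‖ = ‖d‖ := h1
  rw [h2]
  exact norm_fst_le d

theorem exists_phi (hs : IsCstarSimple G) [MulAction.IsPretransitive G ι] (x : ι)
    (hH : IsAmenable (MulAction.stabilizer G x)) :
    ∃ φ : StrongDual ℂ (ℓ²(ι, ℂ) →L[ℂ] ℓ²(ι, ℂ)), ‖φ‖ ≤ 1 ∧ φ 1 = 1 ∧
      ∀ g : G, g ≠ 1 → φ (sigHom G ι g) = 0 := by
  classical
  let D : Submodule ℂ ((ℓ²(G, ℂ) →L[ℂ] ℓ²(G, ℂ)) × (ℓ²(ι, ℂ) →L[ℂ] ℓ²(ι, ℂ))) :=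
    Subalgebra.toSubmodule (jointD G ι).toSubalgebra
  let q : D →ₗ[ℂ] (ℓ²(ι, ℂ) →L[ℂ] ℓ²(ι, ℂ)) := (LinearMap.snd ℂ _ _).comp D.subtype
  have hq : Function.Injective q := by
    rw [injective_iff_map_eq_zero]
    intro a ha
    exact Subtype.ext (jointD_inj hs x hH a.1 a.2 ha)
  let e := LinearEquiv.ofInjective q hq
  let τ : D →ₗ[ℂ] ℂ :=
    { toFun := fun d => inner ℂ (dl (1 : G)) (d.1.1 (dl 1))
      map_add' := fun a b => inner_add_right _ _ _
      map_smul' := fun c a => inner_smul_right _ _ _ }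
  have hτ : ∀ d : D, ‖τ d‖ ≤ ‖q d‖ := by
    intro d
    refine (norm_inner_le_norm (𝕜 := ℂ) (dl (1 : G)) (d.1.1 (dl 1))).trans ?_
    rw [dl_norm, one_mul]
    refine (d.1.1.le_opNorm _).trans ?_
    rw [dl_norm, mul_one]
    exact jointD_norm' hs x hH d.1 d.2
  let ψ : StrongDual ℂ (LinearMap.range q) :=
    LinearMap.mkContinuous (τ.comp e.symm.toLinearMap) 1 (by
      intro y
      rw [one_mul]
      refine (hτ _).trans (le_of_eq ?_)
      have : q (e.symm y) = y := congrArg Subtype.val (e.apply_symm_apply y)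
      change ‖q (e.symm y)‖ = ‖y‖
      rw [this]; rfl)
  have hψ : ∀ d : D, ψ (e d) = τ d := by
    intro d
    change τ (e.symm (e d)) = τ d
    rw [e.symm_apply_apply]
  obtain ⟨φ, hφ, hn⟩ := exists_extension_norm_eq (LinearMap.range q) ψ
  have hφd : ∀ g : G, φ (sigHom G ι g) = inner ℂ (dl (1 : G)) (lreg g (dl 1)) := by
    intro g
    exact (hφ (e ⟨_, jointD_mem g⟩)).trans (hψ _)
  refine ⟨φ, ?_, ?_, fun g hg => ?_⟩
  · rw [hn]; exact LinearMap.mkContinuous_norm_le _ zero_le_one _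
  · rw [← (sigHom G ι).map_one, hφd, lreg_dl, inner_dl_dl]; simp
  · rw [hφd, lreg_dl, inner_dl_dl, if_neg]
    simpa using hg.symm

end simp_free

variable {Y : Type u} [TopologicalSpace Y] [CompactSpace Y] [T2Space Y]
  [MulAction G Y] [ContinuousConstSMul G Y]

theorem flip_norm {ι : Type*} [MulAction G ι] (t : G) (M : ℓ²(ι, ℂ) →L[ℂ] ℓ²(ι, ℂ))
    (hM1 : ∀ ξ i, t • i = i → M ξ i = ξ i) (hM0 : ∀ ξ i, t • i ≠ i → M ξ i = 0) :
    ‖(2 : ℂ) • M - sigHom G ι t‖ ≤ 1 := by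
  refine op_norm_le_of_sq _ 1 zero_le_one fun ξ => ?_
  have s4 := (MulAction.toPerm t).symm.hasSum_iff.2 (l2_hasSum ξ)
  refine ⟨_, _, s4, by simp, fun i => ?_⟩
  change ‖2 * M ξ i - ξ (t⁻¹ • i)‖ ^ 2 ≤ ‖ξ (t⁻¹ • i)‖ ^ 2
  by_cases h : t • i = i
  · have h2 : t⁻¹ • i = i := by rw [inv_smul_eq_iff, h]
    rw [hM1 ξ i h, h2]
    refine le_of_eq ?_
    congr 2; ring
  · rw [hM0 ξ i h]; simp

theorem simple_imp_free (hY : IsFurstenberg G Y) (hs : IsCstarSimple G) (x : Y) (t : G)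
    (ht : t • x = x) : t = 1 := by
  classical
  by_contra hne
  let ι := MulAction.orbit G x
  let x0 : ι := ⟨x, MulAction.mem_orbit_self x⟩
  have hst : MulAction.stabilizer G x0 = MulAction.stabilizer G x := by
    ext g
    simp only [MulAction.mem_stabilizer_iff]
    exact Subtype.ext_iff
  have hH : IsAmenable (MulAction.stabilizer G x0) := by
    rw [hst]; exact furst_stab_amenable hY x
  obtain ⟨φ, hφ, hφ1, hφg⟩ := exists_phi (ι := ι) hs x0 hH
  have hcl := furst_fix_clopen hY t
  let f : C(Y, ℝ) := ⟨Set.indicator {y : Y | t • y = y} (fun _ => 1),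
    continuous_const.indicator (fun a ha => by rw [hcl.frontier_eq] at ha; exact ha.elim)⟩
  have hf : ∀ y, f y = if t • y = y then 1 else 0 := fun y => by
    simp [f, Set.indicator_apply]
  obtain ⟨g, hg⟩ := bdry_state hY.1 (stC (Subtype.val : ι → Y) φ) (stC_pos _ φ hφ hφ1)
    (stC_one _ φ hφ1) x f (ε := 1 / 4) (by norm_num)
  rw [hf, if_pos ht, stC_apply] at hg
  have hg' := (abs_lt.1 hg).1
  have hne' : g⁻¹ * t * g ≠ 1 := by
    intro h
    apply hne
    have : t = g * (g⁻¹ * t * g) * g⁻¹ := by group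
    rw [this, h]; group
  have hfix : ∀ i : ι, t • (g • (i : Y)) = g • (i : Y) ↔ (g⁻¹ * t * g) • i = i := by
    intro i
    rw [Subtype.ext_iff, MulAction.orbit.coe_smul, mul_smul, mul_smul, inv_smul_eq_iff]
  have hn := flip_norm (ι := ι) (g⁻¹ * t * g) (mulC (Subtype.val : ι → Y) (trC g f))
    (fun ξ i hi => by
      rw [mulC_apply, trC_apply, hf, if_pos ((hfix i).2 hi)]; simp)
    (fun ξ i hi => by
      rw [mulC_apply, trC_apply, hf, if_neg (fun h => hi ((hfix i).1 h))]; simp)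
  have h1 := re_le_of_norm φ hφ _ 1 hn
  rw [map_sub, map_smul, hφg _ hne', sub_zero, smul_eq_mul] at h1
  have h2 : ((2 : ℂ) * φ (mulC (Subtype.val : ι → Y) (trC g f))).re =
      2 * (φ (mulC (Subtype.val : ι → Y) (trC g f))).re := by simp
  linarith

/-- A discrete group fails to be C*-simple if and only if the collection of point stabilizers
of its Furstenberg boundary is a non-trivial amenable uniformly recurrent subgroup. -/
theorem not_cstarSimple_iff_stabilizers_nontrivial_amenable_urs (G : Type u) [Group G]
    (Y : Type u) [TopologicalSpace Y] [CompactSpace Y] [T2Space Y] [MulAction G Y]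
    [ContinuousConstSMul G Y] (hY : IsFurstenberg G Y) :
    ¬ IsCstarSimple G ↔
      (IsURS G {H : Subgroup G | ∃ x : Y, H = MulAction.stabilizer G x} ∧
        (∀ H ∈ {H : Subgroup G | ∃ x : Y, H = MulAction.stabilizer G x}, IsAmenable H) ∧
        {H : Subgroup G | ∃ x : Y, H = MulAction.stabilizer G x} ≠ {(⊥ : Subgroup G)}) := by

  have hurs := furst_urs hY
  constructor
  · intro hns
    refine ⟨hurs, ?_, fun h => hns ?_⟩
    · rintro H ⟨x, rfl⟩
      exact furst_stab_amenable hY x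
    · obtain ⟨x⟩ := hY.1.1
      refine free_imp_simple hY.1 x fun g hg => ?_
      have h1 : MulAction.stabilizer G x ∈
          {H : Subgroup G | ∃ x : Y, H = MulAction.stabilizer G x} := ⟨x, rfl⟩
      rw [h, Set.mem_singleton_iff] at h1
      have h2 : g ∈ MulAction.stabilizer G x := hg
      rw [h1] at h2
      exact Subgroup.mem_bot.1 h2
  · rintro ⟨-, -, hne⟩ hs
    apply hne
    have key : ∀ x : Y, MulAction.stabilizer G x = ⊥ := fun x =>
      (Subgroup.eq_bot_iff_forall _).2 fun g hg => simple_imp_free hY hs x g hg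
    obtain ⟨x⟩ := hY.1.1
    ext H
    constructor
    · rintro ⟨y, rfl⟩
      exact key y
    · intro hH
      rw [Set.mem_singleton_iff] at hH
      exact ⟨x, by rw [hH, key x]⟩
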